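/- arXiv:1210.5869 — 4 statements merged into one kernel-verified Lean document; each statement's English description precedes it below -/
import Mathlib

section
/- Let ℓ ≥ 2 and n = 3ℓ+1. The maximum of P(S;n) over all subsets S of {1,…,n} equals (2/5)·3^{1−ℓ}·n!, i.e. 5·3^{ℓ−1} times the maximum equals 2·n!. -/
/-- `i` (1-based, with `1 < i < n`) is a peak of the permutation `σ` of `{1,…,n}`
(represented as a permutation of `Fin n`, position `j` (1-based) being index `j-1`). -/
def IsPeak {n : ℕ} (σ : Equiv.Perm (Fin n)) (i : ℕ) : Prop :=
  ∃ (h₂ : 2 ≤ i) (h₃ : i < n),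
    σ ⟨i - 2, by omega⟩ < σ ⟨i - 1, by omega⟩ ∧ σ ⟨i, h₃⟩ < σ ⟨i - 1, by omega⟩

open Classical in
/-- The peak set of a permutation of `{1,…,n}` (as a set of 1-based positions). -/
noncomputable def peakSet {n : ℕ} (σ : Equiv.Perm (Fin n)) : Finset ℕ :=
  (Finset.range n).filter (fun i => IsPeak σ i)

/-- `P(S;n)`: the number of permutations of `{1,…,n}` with peak set `S`. -/
noncomputable def numPeakSet (n : ℕ) (S : Finset ℕ) : ℕ :=
  Nat.card {σ : Equiv.Perm (Fin n) // peakSet σ = S}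

/-- `c` is a composition of `n`: a list of positive integers summing to `n`. -/
def IsComposition (n : ℕ) (c : List ℕ) : Prop :=
  (∀ x ∈ c, 0 < x) ∧ c.sum = n

/-- The set `S(c)` of proper partial sums of the composition `c`. -/
def compPeaks (c : List ℕ) : Finset ℕ :=
  (Finset.range (c.length - 1)).image (fun i => (c.take (i + 1)).sum)

/-- `P(c)`: the number of permutations of `{1,…,|c|}` whose peak set is `S(c)`. -/
noncomputable def Pcomp (c : List ℕ) : ℕ :=
  numPeakSet c.sum (compPeaks c)

/-- A composition is maximal if `P(b) ≤ P(c)` for every composition `b` of the same size. -/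
def IsMaximal (c : List ℕ) : Prop :=
  ∀ b : List ℕ, IsComposition c.sum b → Pcomp b ≤ Pcomp c

namespace PeakMax
open Equiv Finset

noncomputable section
open scoped Classical

variable {N : ℕ}

/-- value at position `i` (0-based), junk 0 outside. -/
def val (σ : Perm (Fin N)) (i : ℕ) : ℕ := if h : i < N then (σ ⟨i, h⟩ : ℕ) else 0

/-- probability of an event -/
def pr (A : Perm (Fin N) → Prop) : ℚ := ((univ.filter A).card : ℚ) / (N.factorial : ℚ)

def Supp (a b : ℕ) (h : Perm (Fin N)) : Prop := ∀ x : Fin N, ¬ (a ≤ x.1 ∧ x.1 < b) → h x = x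

def SameOrd (a b : ℕ) (σ τ : Perm (Fin N)) : Prop :=
  ∀ i j, a ≤ i → i < b → a ≤ j → j < b → (val σ i < val σ j ↔ val τ i < val τ j)

lemma val_eq (σ : Perm (Fin N)) {i : ℕ} (h : i < N) : val σ i = σ ⟨i, h⟩ := by
  simp [val, h]

lemma val_inj (σ : Perm (Fin N)) {i j : ℕ} (hi : i < N) (hj : j < N) (h : val σ i = val σ j) :
    i = j := by
  rw [val_eq σ hi, val_eq σ hj] at h
  have := σ.injective (Fin.ext h)
  simpa using this

lemma val_mul (σ h : Perm (Fin N)) {i : ℕ} (hi : i < N) :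
    val (σ * h) i = val σ (h ⟨i, hi⟩).1 := by
  rw [val_eq _ hi, val_eq _ (h ⟨i, hi⟩).2]; rfl

lemma Supp.inv {a b : ℕ} {h : Perm (Fin N)} (hh : Supp a b h) : Supp a b h⁻¹ := by
  intro x hx
  rw [Perm.inv_eq_iff_eq]
  exact (hh x hx).symm

lemma Supp.mul {a b : ℕ} {h k : Perm (Fin N)} (hh : Supp a b h) (hk : Supp a b k) :
    Supp a b (h * k) := by
  intro x hx
  rw [Perm.mul_apply, hk x hx, hh x hx]

lemma Supp.mem {a b : ℕ} {h : Perm (Fin N)} (hh : Supp a b h) (x : Fin N)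
    (hx : a ≤ x.1 ∧ x.1 < b) : a ≤ (h x).1 ∧ (h x).1 < b := by
  by_contra hc
  have := hh _ hc
  have := h.injective this
  rw [this] at hc
  exact hc hx

lemma Supp.val_out {a b : ℕ} {h : Perm (Fin N)} (hh : Supp a b h) (σ : Perm (Fin N)) {i : ℕ}
    (hi : ¬ (a ≤ i ∧ i < b)) : val (σ * h) i = val σ i := by
  by_cases hN : i < N
  · rw [val_mul σ h hN, hh ⟨i, hN⟩ hi]
  · simp [val, hN]

lemma Supp.val_in {a b : ℕ} {h : Perm (Fin N)} (hh : Supp a b h) (hb : b ≤ N) (σ : Perm (Fin N))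
    {i : ℕ} (ha : a ≤ i) (hi : i < b) : ∃ j, a ≤ j ∧ j < b ∧ val (σ * h) i = val σ j := by
  have hN : i < N := by omega
  refine ⟨(h ⟨i, hN⟩).1, (hh.mem ⟨i, hN⟩ ⟨ha, hi⟩).1, (hh.mem ⟨i, hN⟩ ⟨ha, hi⟩).2, val_mul σ h hN⟩

lemma exists_sort (a b : ℕ) (hb : b ≤ N) (σ : Perm (Fin N)) :
    ∃ h, Supp a b h ∧ SameOrd a b (σ * h) 1 := by
  set L : Finset (Fin N) := univ.filter (fun x => a ≤ x.1 ∧ x.1 < b) with hL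
  have hc : (L.map σ.toEmbedding).card = L.card := card_map _
  let e1 := L.orderIsoOfFin rfl
  let e2 := (L.map σ.toEmbedding).orderIsoOfFin hc
  let s : L ≃ (L.map σ.toEmbedding : Finset (Fin N)) :=
    { toFun := fun x => ⟨σ x.1, by simp⟩
      invFun := fun y => ⟨σ.symm y.1, by
        obtain ⟨y, hy⟩ := y
        simpa [Finset.mem_map_equiv] using hy⟩
      left_inv := fun x => by simp
      right_inv := fun y => by simp }
  let g : Perm L := (e1.symm.toEquiv.trans e2.toEquiv).trans s.symm
  have hg : ∀ x : L, σ (g x).1 = (e2 (e1.symm x)).1 := by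
    intro x
    have : s (g x) = e2 (e1.symm x) := by simp [g]
    rw [← this]
    rfl
  refine ⟨Perm.ofSubtype g, ?_, ?_⟩
  · intro x hx
    exact Perm.ofSubtype_apply_of_not_mem g (by simpa [hL] using hx)
  · intro i j hai hib haj hjb
    have hi : i < N := by omega
    have hj : j < N := by omega
    have mi : (⟨i, hi⟩ : Fin N) ∈ L := by simp [hL, hai, hib]
    have mj : (⟨j, hj⟩ : Fin N) ∈ L := by simp [hL, haj, hjb]
    rw [val_eq _ hi, val_eq _ hj, val_eq _ hi, val_eq _ hj, Perm.mul_apply, Perm.mul_apply,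
      Perm.ofSubtype_apply_of_mem g mi, Perm.ofSubtype_apply_of_mem g mj, hg, hg]
    have : e2 (e1.symm ⟨_, mi⟩) < e2 (e1.symm ⟨_, mj⟩) ↔ (⟨_, mi⟩ : L) < ⟨_, mj⟩ := by simp
    exact this

lemma count_const (a b : ℕ) (hb : b ≤ N) (A : Perm (Fin N) → Prop)
    (hA : ∀ σ τ, SameOrd a b σ τ → A σ → A τ) (σ : Perm (Fin N)) :
    (univ.filter fun h => Supp a b h ∧ A (σ * h)).card
      = (univ.filter fun h : Perm (Fin N) => Supp a b h ∧ A h).card := by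
  obtain ⟨k, hk, ho⟩ := exists_sort a b hb σ
  have key : ∀ h, Supp a b h → SameOrd a b (σ * (k * h)) h := by
    intro h hh i j hai hib haj hjb
    have hi : i < N := by omega
    have hj : j < N := by omega
    rw [← mul_assoc, val_mul _ _ hi, val_mul _ _ hj]
    have m1 := hh.mem ⟨i, hi⟩ ⟨hai, hib⟩
    have m2 := hh.mem ⟨j, hj⟩ ⟨haj, hjb⟩
    rw [ho _ _ m1.1 m1.2 m2.1 m2.2, ← val_mul 1 h hi, ← val_mul 1 h hj, one_mul]
  have sym : ∀ σ τ : Perm (Fin N), SameOrd a b σ τ → SameOrd a b τ σ :=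
    fun σ τ h i j h1 h2 h3 h4 => (h i j h1 h2 h3 h4).symm
  symm
  refine Finset.card_bij (fun h _ => k * h) ?_ ?_ ?_
  · intro h hh
    simp only [mem_filter, mem_univ, true_and] at hh ⊢
    exact ⟨hk.mul hh.1, hA _ _ (sym _ _ (key h hh.1)) hh.2⟩
  · intro h _ h' _ e
    exact mul_left_cancel e
  · intro h hh
    simp only [mem_filter, mem_univ, true_and] at hh
    have hs : Supp a b (k⁻¹ * h) := hk.inv.mul hh.1
    refine ⟨k⁻¹ * h, ?_, by simp⟩
    simp only [mem_filter, mem_univ, true_and]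
    refine ⟨hs, hA _ _ (key _ hs) ?_⟩
    simpa using hh.2

lemma double_count (a b : ℕ) (hb : b ≤ N) (M A : Perm (Fin N) → Prop)
    (hM : ∀ σ h, Supp a b h → M σ → M (σ * h))
    (hA : ∀ σ τ, SameOrd a b σ τ → A σ → A τ) :
    (univ.filter fun h : Perm (Fin N) => Supp a b h).card * (univ.filter fun σ => M σ ∧ A σ).card
      = (univ.filter M).card * (univ.filter fun h : Perm (Fin N) => Supp a b h ∧ A h).card := by
  have h1 : ∑ h ∈ (univ.filter fun h : Perm (Fin N) => Supp a b h),
      ∑ σ : Perm (Fin N), (if M (σ * h) ∧ A (σ * h) then 1 else 0)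
      = (univ.filter fun h : Perm (Fin N) => Supp a b h).card *
        (univ.filter fun σ => M σ ∧ A σ).card := by
    rw [Finset.card_eq_sum_ones, Finset.sum_mul]
    refine Finset.sum_congr rfl fun h _ => ?_
    rw [one_mul, Finset.card_filter]
    exact Equiv.sum_comp (Equiv.mulRight h) (fun σ => if M σ ∧ A σ then 1 else 0)
  rw [← h1, Finset.sum_comm, Finset.card_filter, Finset.sum_mul]
  refine Finset.sum_congr rfl fun σ _ => ?_
  by_cases hσ : M σ
  · rw [if_pos hσ, one_mul, ← count_const a b hb A hA σ, Finset.sum_filter, Finset.card_filter]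
    refine Finset.sum_congr rfl fun h _ => ?_
    by_cases hs : Supp a b h
    · have := hM σ h hs hσ
      simp [hs, this]
    · simp [hs]
  · rw [if_neg hσ, zero_mul]
    refine Finset.sum_eq_zero fun h hh => ?_
    simp only [mem_filter, mem_univ, true_and] at hh
    rw [if_neg]
    rintro ⟨hm, _⟩
    have := hM _ h⁻¹ hh.inv hm
    rw [mul_assoc, mul_inv_cancel, mul_one] at this
    exact hσ this

lemma card_perm : ((univ : Finset (Perm (Fin N))).card) = N.factorial := by
  rw [Finset.card_univ, Fintype.card_perm, Fintype.card_fin]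

lemma pr_def (A : Perm (Fin N) → Prop) [DecidablePred A] :
    pr A = ((univ.filter A).card : ℚ) / (N.factorial : ℚ) := by
  unfold pr
  congr

lemma indep (a b : ℕ) (hb : b ≤ N) (M A : Perm (Fin N) → Prop)
    (hM : ∀ σ h, Supp a b h → M σ → M (σ * h))
    (hA : ∀ σ τ, SameOrd a b σ τ → A σ → A τ) :
    pr (fun σ => M σ ∧ A σ) = pr M * pr A := by
  have e1 := double_count a b hb M A hM hA
  have e2 := double_count a b hb (fun _ => True) A (fun _ _ _ _ => trivial) hA
  simp only [true_and, Finset.filter_true, card_perm] at e2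
  have hpos : 0 < (univ.filter fun h : Perm (Fin N) => Supp a b h).card :=
    Finset.card_pos.mpr ⟨1, by simp [Supp]⟩
  have hN : (N.factorial : ℚ) ≠ 0 := by exact_mod_cast N.factorial_ne_zero
  have e1' := congrArg (Nat.cast : ℕ → ℚ) e1
  have e2' := congrArg (Nat.cast : ℕ → ℚ) e2
  push_cast at e1' e2'
  have hp : ((univ.filter fun h : Perm (Fin N) => Supp a b h).card : ℚ) ≠ 0 := by
    exact_mod_cast hpos.ne'
  rw [pr_def (fun σ => M σ ∧ A σ), pr_def M, pr_def A]
  rw [div_mul_div_comm, div_eq_div_iff hN (mul_ne_zero hN hN)]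
  apply mul_left_cancel₀ hp
  linear_combination (N.factorial * N.factorial : ℚ) * e1' - ((univ.filter M).card * N.factorial : ℚ) * e2'

lemma pr_nonneg (A : Perm (Fin N) → Prop) : 0 ≤ pr A := by
  unfold pr; positivity

lemma pr_mono {A B : Perm (Fin N) → Prop} (h : ∀ σ, A σ → B σ) : pr A ≤ pr B := by
  unfold pr
  gcongr
  exact h _

lemma pr_congr {A B : Perm (Fin N) → Prop} (h : ∀ σ, A σ ↔ B σ) : pr A = pr B := by
  have : A = B := funext fun σ => propext (h σ)
  rw [this]

lemma pr_true : pr (fun _ : Perm (Fin N) => True) = 1 := by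
  have hN : (N.factorial : ℚ) ≠ 0 := by exact_mod_cast N.factorial_ne_zero
  unfold pr
  rw [Finset.filter_true, card_perm, div_self hN]

lemma pr_le_one (A : Perm (Fin N) → Prop) : pr A ≤ 1 := by
  rw [← pr_true (N := N)]
  exact pr_mono fun _ _ => trivial

lemma pr_false {A : Perm (Fin N) → Prop} (h : ∀ σ, ¬ A σ) : pr A = 0 := by
  unfold pr
  rw [Finset.filter_false_of_mem (fun σ _ => h σ)]
  simp

/-- the maximum over the window `[a,b)` is at `i` -/
def Mx (a b i : ℕ) (σ : Perm (Fin N)) : Prop := ∀ j, a ≤ j → j < b → j ≠ i → val σ j < val σ i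

lemma pr_split (a b : ℕ) (hab : a < b) (hb : b ≤ N) (A : Perm (Fin N) → Prop) :
    pr A = ∑ i ∈ Ico a b, pr (fun σ => A σ ∧ Mx a b i σ) := by
  unfold pr
  rw [← Finset.sum_div]
  congr 1
  rw [← Nat.cast_sum]
  congr 1
  simp only [Finset.card_filter]
  rw [Finset.sum_comm]
  refine Finset.sum_congr rfl fun σ _ => ?_
  obtain ⟨i, hi, hmax⟩ := Finset.exists_max_image (Ico a b) (val σ) ⟨a, by simp [hab]⟩
  have hmi := Finset.mem_Ico.mp hi
  have hM : Mx a b i σ := by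
    intro j h1 h2 h3
    refine lt_of_le_of_ne (hmax j (Finset.mem_Ico.mpr ⟨h1, h2⟩)) fun e => h3 ?_
    exact val_inj σ (by omega) (by omega) e
  rw [Finset.sum_eq_single_of_mem i hi]
  · simp [hM]
  · intro j hj hji
    have hmj := Finset.mem_Ico.mp hj
    rw [if_neg]
    rintro ⟨_, h⟩
    have h1 := h i hmi.1 hmi.2 (Ne.symm hji)
    have h2 := hM j hmj.1 hmj.2 hji
    omega

lemma pr_Mx_swap (a b i j : ℕ) (hb : b ≤ N) (hi : a ≤ i ∧ i < b) (hj : a ≤ j ∧ j < b) :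
    pr (Mx (N := N) a b i) ≤ pr (Mx (N := N) a b j) := by
  unfold pr
  gcongr ?_ / _
  norm_cast
  have hi' : i < N := by omega
  have hj' : j < N := by omega
  refine Finset.card_le_card_of_injOn (fun σ => σ * swap ⟨i, hi'⟩ ⟨j, hj'⟩) ?_ ?_
  · intro σ hσ
    simp only [coe_filter, mem_univ, true_and, Set.mem_ofPred_eq] at hσ ⊢
    intro l hl1 hl2 hl3
    have hl : l < N := by omega
    rw [val_mul _ _ hl, val_mul _ _ hj', swap_apply_right]
    by_cases hli : l = i
    · subst hli
      rw [swap_apply_left]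
      exact hσ j hj.1 hj.2 (fun e => hl3 e.symm)
    · rw [swap_apply_of_ne_of_ne (by simpa using hli) (by simpa using hl3)]
      exact hσ l hl1 hl2 hli
  · intro σ _ τ _ e
    exact mul_right_cancel e

lemma pr_Mx (a b i : ℕ) (hb : b ≤ N) (hi : a ≤ i ∧ i < b) :
    pr (Mx (N := N) a b i) = 1 / ((b - a : ℕ) : ℚ) := by
  have h := pr_split (N := N) a b (by omega) hb (fun _ => True)
  rw [pr_true] at h
  have : ∀ j ∈ Ico a b, pr (fun σ : Perm (Fin N) => True ∧ Mx a b j σ) = pr (Mx (N := N) a b i) := by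
    intro j hj
    have hj := Finset.mem_Ico.mp hj
    simp only [true_and]
    exact le_antisymm (pr_Mx_swap a b j i hb hj hi) (pr_Mx_swap a b i j hb hi hj)
  rw [Finset.sum_congr rfl this, Finset.sum_const, Nat.card_Ico, nsmul_eq_mul] at h
  have h0 : ((b - a : ℕ) : ℚ) ≠ 0 := by
    have : b - a ≠ 0 := by omega
    exact_mod_cast this
  field_simp
  linarith

def Pk (σ : Perm (Fin N)) (i : ℕ) : Prop := val σ (i-1) < val σ i ∧ val σ (i+1) < val σ i

def W (S : Finset ℕ) (a b : ℕ) (σ : Perm (Fin N)) : Prop :=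
  ∀ i, a < i → i + 1 < b → (Pk σ i ↔ i ∈ S)

lemma W_same (S : Finset ℕ) (a b : ℕ) (σ τ : Perm (Fin N)) (h : SameOrd a b σ τ) (hW : W S a b σ) :
    W S a b τ := by
  intro i h1 h2
  rw [← hW i h1 h2]
  unfold Pk
  rw [h (i-1) i (by omega) (by omega) (by omega) (by omega),
    h (i+1) i (by omega) (by omega) (by omega) (by omega)]

lemma W_supp (S : Finset ℕ) (a b c d : ℕ) (hd : b ≤ c ∨ d ≤ a) (σ h : Perm (Fin N))
    (hh : Supp c d h) (hW : W S a b σ) : W S a b (σ * h) := by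
  intro i h1 h2
  rw [← hW i h1 h2]
  unfold Pk
  rw [hh.val_out σ (i := i-1) (by omega), hh.val_out σ (i := i) (by omega),
    hh.val_out σ (i := i+1) (by omega)]

lemma Mx_supp (a b i c d : ℕ) (hac : a ≤ c) (hdb : d ≤ b) (hb : b ≤ N) (hi : ¬ (c ≤ i ∧ i < d))
    (σ h : Perm (Fin N)) (hh : Supp c d h) (hM : Mx a b i σ) : Mx a b i (σ * h) := by
  intro j h1 h2 h3
  rw [hh.val_out σ hi]
  by_cases hj : c ≤ j ∧ j < d
  · obtain ⟨j', h4, h5, e⟩ := hh.val_in (by omega) σ hj.1 hj.2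
    rw [e]
    exact hM j' (by omega) (by omega) (by rintro rfl; exact hi ⟨h4, h5⟩)
  · rw [hh.val_out σ hj]
    exact hM j h1 h2 h3

/-- probability of the window pattern -/
def p (N : ℕ) (S : Finset ℕ) (a b : ℕ) : ℚ := pr (N := N) (W S a b)

lemma pr_three (S : Finset ℕ) (a b i : ℕ) (hb : b ≤ N) (hi : a ≤ i ∧ i < b) :
    pr (fun σ : Perm (Fin N) => (Mx a b i σ ∧ W S a i σ) ∧ W S (i+1) b σ)
      = 1 / ((b - a : ℕ) : ℚ) * p N S a i * p N S (i+1) b := by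
  rw [indep (i+1) b hb (fun σ => Mx a b i σ ∧ W S a i σ) (W S (i+1) b),
    indep a i (by omega) (Mx a b i) (W S a i), pr_Mx a b i hb hi]
  · rfl
  · exact fun σ h hh => Mx_supp a b i a i le_rfl hi.2.le hb (by omega) σ h hh
  · exact fun σ τ => W_same S a i σ τ
  · exact fun σ h hh hM => ⟨Mx_supp a b i (i+1) b (by omega) le_rfl hb (by omega) σ h hh hM.1,
      W_supp S a i (i+1) b (by omega) σ h hh hM.2⟩
  · exact fun σ τ => W_same S (i+1) b σ τ

lemma p_small (S : Finset ℕ) (a b : ℕ) (h : b ≤ a + 2) : p N S a b = 1 := by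
  unfold p
  rw [← pr_true (N := N)]
  refine pr_congr fun σ => ?_
  simp only [iff_true]
  intro i h1 h2
  omega

lemma p_nonneg (S : Finset ℕ) (a b : ℕ) : 0 ≤ p N S a b := pr_nonneg _

lemma W_sub (S : Finset ℕ) (a b c d : ℕ) (hac : a ≤ c) (hdb : d ≤ b) (σ : Perm (Fin N))
    (h : W S a b σ) : W S c d σ := fun i h1 h2 => h i (by omega) (by omega)

lemma max_rec (S : Finset ℕ) (a b : ℕ) (hab : a + 3 ≤ b) (hb : b ≤ N) :
    ((b - a : ℕ) : ℚ) * p N S a b ≤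
      ∑ i ∈ (Ioo a (b-1)).filter (· ∈ S), p N S a i * p N S (i+1) b
      + (if a + 1 ∈ S then 0 else p N S (a+1) b)
      + (if b - 2 ∈ S then 0 else p N S a (b-1)) := by
  have hn : (0 : ℚ) < ((b - a : ℕ) : ℚ) := by
    have : 0 < b - a := by omega
    exact_mod_cast this
  have gen : ∀ i, a ≤ i → i < b → ((b - a : ℕ) : ℚ) * pr (fun σ : Perm (Fin N) => W S a b σ ∧ Mx a b i σ)
      ≤ p N S a i * p N S (i+1) b := by
    intro i h1 h2
    have h3 := pr_three (N := N) S a b i hb ⟨h1, h2⟩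
    have h4 : pr (fun σ : Perm (Fin N) => W S a b σ ∧ Mx a b i σ) ≤
        pr (fun σ : Perm (Fin N) => (Mx a b i σ ∧ W S a i σ) ∧ W S (i+1) b σ) :=
      pr_mono fun σ hσ => ⟨⟨hσ.2, W_sub S a b a i le_rfl h2.le σ hσ.1⟩,
        W_sub S a b (i+1) b (by omega) le_rfl σ hσ.1⟩
    rw [h3] at h4
    calc _ ≤ ((b - a : ℕ) : ℚ) * (1 / ((b - a : ℕ) : ℚ) * p N S a i * p N S (i+1) b) := by gcongr
      _ = _ := by field_simp
  have hpk : ∀ i, a < i → i + 1 < b → ∀ σ : Perm (Fin N), Mx a b i σ → Pk σ i := by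
    intro i h1 h2 σ hM
    exact ⟨hM _ (by omega) (by omega) (by omega), hM _ (by omega) (by omega) (by omega)⟩
  have e : Ico a b = insert a (insert (b-1) (Ioo a (b-1))) := by
    ext x; simp only [mem_Ico, mem_insert, mem_Ioo]; omega
  have hs : p N S a b = _ := pr_split (N := N) a b (by omega) hb (W S a b)
  rw [hs, e, Finset.sum_insert (by simp; omega), Finset.sum_insert (by simp), mul_add, mul_add,
    Finset.mul_sum, Finset.sum_filter]
  have t1 : ((b - a : ℕ) : ℚ) * pr (fun σ : Perm (Fin N) => W S a b σ ∧ Mx a b a σ) ≤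
      (if a + 1 ∈ S then 0 else p N S (a+1) b) := by
    split_ifs with h
    · rw [pr_false, mul_zero]
      rintro σ ⟨h1, h2⟩
      have h3 := ((h1 (a+1) (by omega) (by omega)).mpr h).1
      have h4 := h2 (a+1) (by omega) (by omega) (by omega)
      simp only [Nat.add_sub_cancel] at h3
      omega
    · have := gen a le_rfl (by omega)
      rwa [p_small S a a (by omega), one_mul] at this
  have t2 : ((b - a : ℕ) : ℚ) * pr (fun σ : Perm (Fin N) => W S a b σ ∧ Mx a b (b-1) σ) ≤
      (if b - 2 ∈ S then 0 else p N S a (b-1)) := by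
    split_ifs with h
    · rw [pr_false, mul_zero]
      rintro σ ⟨h1, h2⟩
      have h3 := ((h1 (b-2) (by omega) (by omega)).mpr h).2
      have h4 := h2 (b-2) (by omega) (by omega) (by omega)
      rw [show b - 2 + 1 = b - 1 by omega] at h3
      omega
    · have := gen (b-1) (by omega) (by omega)
      rwa [p_small S (b-1+1) b (by omega), mul_one] at this
  have t3 : ∑ i ∈ Ioo a (b-1), ((b - a : ℕ) : ℚ) * pr (fun σ : Perm (Fin N) => W S a b σ ∧ Mx a b i σ)
      ≤ ∑ i ∈ Ioo a (b-1), if i ∈ S then p N S a i * p N S (i+1) b else 0 := by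
    refine Finset.sum_le_sum fun i hi => ?_
    rw [mem_Ioo] at hi
    split_ifs with h
    · exact gen i (by omega) (by omega)
    · rw [pr_false, mul_zero]
      rintro σ ⟨h1, h2⟩
      exact h ((h1 i hi.1 (by omega)).mp (hpk i hi.1 (by omega) σ h2))
  linarith

lemma p_left (S : Finset ℕ) (a b : ℕ) (h : a + 2 ∈ S) (hb : a + 3 < b) (hn : a + 1 ∉ S) :
    p N S (a+1) b = p N S a b := by
  refine pr_congr fun σ => ⟨fun hW i h1 h2 => ?_, W_sub S a b (a+1) b (by omega) le_rfl σ⟩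
  by_cases hi : i = a + 1
  · subst hi
    have := (hW (a+2) (by omega) (by omega)).mpr h
    simp only [hn, iff_false]
    intro h3
    have h4 := this.1
    have h5 := h3.2
    rw [show a + 2 - 1 = a + 1 by omega] at h4
    rw [show a + 1 + 1 = a + 2 by omega] at h5
    omega
  · exact hW i (by omega) h2

lemma p_right (S : Finset ℕ) (a b : ℕ) (h : b - 2 ∈ S) (hb : a + 2 < b) (hn : b - 1 ∉ S) :
    p N S a b = p N S a (b+1) := by
  refine pr_congr fun σ => ⟨fun hW i h1 h2 => ?_, W_sub S a (b+1) a b le_rfl (by omega) σ⟩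
  by_cases hi : i = b - 1
  · subst hi
    have := (hW (b-2) (by omega) (by omega)).mpr h
    simp only [hn, iff_false]
    intro h3
    have h4 := this.2
    have h5 := h3.1
    rw [show b - 2 + 1 = b - 1 by omega] at h4
    rw [show b - 1 - 1 = b - 2 by omega] at h5
    omega
  · exact hW i (by omega) (by omega)


def F (m : ℕ) : ℚ :=
  (if m % 3 = 0 then 3 else if m % 3 = 1 then 9/5 else 6/5) * (1/3)^(m/3)

lemma F0 (i : ℕ) : F (3*i) = 3 * (1/3)^i := by
  unfold F
  rw [show (3*i) % 3 = 0 by omega, show (3*i)/3 = i by omega]; simp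

lemma F1 (i : ℕ) : F (3*i+1) = 9/5 * (1/3)^i := by
  unfold F
  rw [show (3*i+1) % 3 = 1 by omega, show (3*i+1)/3 = i by omega]; simp

lemma F2 (i : ℕ) : F (3*i+2) = 6/5 * (1/3)^i := by
  unfold F
  rw [show (3*i+2) % 3 = 2 by omega, show (3*i+2)/3 = i by omega]; simp

lemma F3 (i : ℕ) : F (3*i+3) = 1 * (1/3)^i := by
  rw [show 3*i+3 = 3*(i+1) by ring, F0, pow_succ]; ring

lemma F4 (i : ℕ) : F (3*i+4) = 3/5 * (1/3)^i := by
  rw [show 3*i+4 = 3*(i+1)+1 by ring, F1, pow_succ]; ring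

lemma F_pos (m : ℕ) : 0 < F m := by
  unfold F
  have : (0:ℚ) < (if m % 3 = 0 then 3 else if m % 3 = 1 then 9/5 else 6/5) := by
    split_ifs <;> norm_num
  positivity

lemma mod_cases (m : ℕ) : ∃ i, m = 3*i ∨ m = 3*i+1 ∨ m = 3*i+2 := ⟨m/3, by omega⟩

lemma F_step (m : ℕ) : F m ≤ 5/3 * F (m+1) := by
  obtain ⟨i, h | h | h⟩ := mod_cases m
  · subst h; rw [F0, F1]; linarith [show (0:ℚ) < (1/3)^i by positivity]
  · subst h; rw [F1, F2]; linarith [show (0:ℚ) < (1/3)^i by positivity]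
  · subst h; rw [F2, F3]; linarith [show (0:ℚ) < (1/3)^i by positivity]

/-- bound type of one side of a split -/
def Side (x : ℕ) (u s l : ℚ) : Prop :=
  (s = 0 ∧ l = 0 ∧ u ≤ F x) ∨ (s = 1 ∧ l = 0 ∧ u ≤ F (x+1)) ∨
    (s = 0 ∧ l = 1 ∧ x = 4 ∧ u ≤ 2/3)

lemma Side.norm {x : ℕ} {u s l : ℚ} (h : Side x u s l) :
    ∃ i : ℕ, ∃ c : ℚ, u ≤ c * (1/3)^i ∧ 0 ≤ c ∧
      ((x = 3*i ∧ l = 0 ∧ (s = 0 ∧ c = 3 ∨ s = 1 ∧ c = 9/5)) ∨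
       (x = 3*i+1 ∧ (s = 0 ∧ l = 0 ∧ c = 9/5 ∨ s = 1 ∧ l = 0 ∧ c = 6/5 ∨ s = 0 ∧ l = 1 ∧ c = 2)) ∨
       (x = 3*i+2 ∧ l = 0 ∧ (s = 0 ∧ c = 6/5 ∨ s = 1 ∧ c = 1))) := by
  rcases h with ⟨hs, hl, hu⟩ | ⟨hs, hl, hu⟩ | ⟨hs, hl, hx, hu⟩
  · obtain ⟨i, h | h | h⟩ := mod_cases x
    · subst h; rw [F0] at hu; exact ⟨i, _, hu, by norm_num, by simp [hs, hl]⟩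
    · subst h; rw [F1] at hu; exact ⟨i, _, hu, by norm_num, by simp [hs, hl]⟩
    · subst h; rw [F2] at hu; exact ⟨i, _, hu, by norm_num, by simp [hs, hl]⟩
  · obtain ⟨i, h | h | h⟩ := mod_cases x
    · subst h; rw [F1] at hu; exact ⟨i, _, hu, by norm_num, by simp [hs, hl]⟩
    · subst h; rw [F2] at hu; exact ⟨i, _, hu, by norm_num, by simp [hs, hl]⟩
    · subst h; rw [F3] at hu; exact ⟨i, _, hu, by norm_num, by simp [hs, hl]⟩
  · exact ⟨1, 2, by linarith, by norm_num, by simp [hs, hl, hx]⟩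

lemma split_bound {x y : ℕ} {u v s l s' l' : ℚ} (hu : Side x u s l) (hv : Side y v s' l')
    (hv0 : 0 ≤ v) :
    u * v ≤ F (x+y) * (3 - (s + s')/2 + (l + l')/3) := by
  obtain ⟨i, c, hu, hc, h1⟩ := hu.norm
  obtain ⟨j, c', hv, hc', h2⟩ := hv.norm
  have hp : (0:ℚ) < (1/3)^(i+j) := by positivity
  have huv : u * v ≤ (c * c') * (1/3)^(i+j) := by
    calc u * v ≤ (c * (1/3)^i) * (c' * (1/3)^j) := by
          apply mul_le_mul hu hv hv0; positivity
      _ = _ := by rw [pow_add]; ring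
  refine huv.trans ?_
  have e0 := F0 (i+j)
  have e1 := F1 (i+j)
  have e2 := F2 (i+j)
  have e3 := F3 (i+j)
  have e4 := F4 (i+j)
  generalize hw : ((1:ℚ)/3)^(i+j) = w at *
  have main : ∀ C D : ℚ, F (x+y) = C * w → c * c' ≤ C * D → c * c' * w ≤ F (x+y) * D := by
    intro C D h h'
    rw [h]
    calc c * c' * w ≤ (C * D) * w := by gcongr
      _ = _ := by ring
  rcases h1 with ⟨hx, h1⟩ | ⟨hx, h1⟩ | ⟨hx, h1⟩ <;> rcases h2 with ⟨hy, h2⟩ | ⟨hy, h2⟩ | ⟨hy, h2⟩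
  · refine main 3 _ (by rw [← e0]; congr 1; omega) ?_
    rcases h1 with ⟨rfl, ⟨rfl, rfl⟩ | ⟨rfl, rfl⟩⟩ <;> rcases h2 with ⟨rfl, ⟨rfl, rfl⟩ | ⟨rfl, rfl⟩⟩ <;> norm_num
  · refine main (9/5) _ (by rw [← e1]; congr 1; omega) ?_
    rcases h1 with ⟨rfl, ⟨rfl, rfl⟩ | ⟨rfl, rfl⟩⟩ <;>
      rcases h2 with ⟨rfl, rfl, rfl⟩ | ⟨rfl, rfl, rfl⟩ | ⟨rfl, rfl, rfl⟩ <;> norm_num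
  · refine main (6/5) _ (by rw [← e2]; congr 1; omega) ?_
    rcases h1 with ⟨rfl, ⟨rfl, rfl⟩ | ⟨rfl, rfl⟩⟩ <;> rcases h2 with ⟨rfl, ⟨rfl, rfl⟩ | ⟨rfl, rfl⟩⟩ <;> norm_num
  · refine main (9/5) _ (by rw [← e1]; congr 1; omega) ?_
    rcases h1 with ⟨rfl, rfl, rfl⟩ | ⟨rfl, rfl, rfl⟩ | ⟨rfl, rfl, rfl⟩ <;>
      rcases h2 with ⟨rfl, ⟨rfl, rfl⟩ | ⟨rfl, rfl⟩⟩ <;> norm_num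
  · refine main (6/5) _ (by rw [← e2]; congr 1; omega) ?_
    rcases h1 with ⟨rfl, rfl, rfl⟩ | ⟨rfl, rfl, rfl⟩ | ⟨rfl, rfl, rfl⟩ <;>
      rcases h2 with ⟨rfl, rfl, rfl⟩ | ⟨rfl, rfl, rfl⟩ | ⟨rfl, rfl, rfl⟩ <;> norm_num
  · refine main 1 _ (by rw [← e3]; congr 1; omega) ?_
    rcases h1 with ⟨rfl, rfl, rfl⟩ | ⟨rfl, rfl, rfl⟩ | ⟨rfl, rfl, rfl⟩ <;>
      rcases h2 with ⟨rfl, ⟨rfl, rfl⟩ | ⟨rfl, rfl⟩⟩ <;> norm_num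
  · refine main (6/5) _ (by rw [← e2]; congr 1; omega) ?_
    rcases h1 with ⟨rfl, ⟨rfl, rfl⟩ | ⟨rfl, rfl⟩⟩ <;> rcases h2 with ⟨rfl, ⟨rfl, rfl⟩ | ⟨rfl, rfl⟩⟩ <;> norm_num
  · refine main 1 _ (by rw [← e3]; congr 1; omega) ?_
    rcases h1 with ⟨rfl, ⟨rfl, rfl⟩ | ⟨rfl, rfl⟩⟩ <;>
      rcases h2 with ⟨rfl, rfl, rfl⟩ | ⟨rfl, rfl, rfl⟩ | ⟨rfl, rfl, rfl⟩ <;> norm_num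
  · refine main (3/5) _ (by rw [← e4]; congr 1; omega) ?_
    rcases h1 with ⟨rfl, ⟨rfl, rfl⟩ | ⟨rfl, rfl⟩⟩ <;> rcases h2 with ⟨rfl, ⟨rfl, rfl⟩ | ⟨rfl, rfl⟩⟩ <;> norm_num

/-- counting lemma -/
lemma count_T (T : Finset ℕ) (lo hi : ℕ) (hadj : ∀ i ∈ T, i + 1 ∉ T) (hne : T.Nonempty)
    (hlo : ∀ i ∈ T, lo ≤ i) (hhi : ∀ i ∈ T, i + 2 ≤ hi) :
    3 * (T.card : ℚ) - ((T.filter fun i => i + 2 ∈ T).card : ℚ) ≤ (hi : ℚ) - lo + 1 := by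
  set A := T.image (· + 1) with hA
  set B := (T.filter fun i => ¬ (i + 2 ∈ T)).image (· + 2) with hB
  have cA : A.card = T.card := Finset.card_image_of_injective _ (add_left_injective 1)
  have cB : B.card = (T.filter fun i => ¬ (i + 2 ∈ T)).card :=
    Finset.card_image_of_injective _ (add_left_injective 2)
  have cT := Finset.card_filter_add_card_filter_not (s := T) (fun i => i + 2 ∈ T)
  have dTA : Disjoint T A := by
    rw [Finset.disjoint_left]
    intro i hi hi'
    simp only [hA, mem_image] at hi'
    obtain ⟨j, hj, rfl⟩ := hi'
    exact hadj j hj hi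
  have dAB : Disjoint (T ∪ A) B := by
    rw [Finset.disjoint_right]
    intro i hi hi'
    simp only [hB, mem_image, mem_filter] at hi
    obtain ⟨j, ⟨hj, hj'⟩, rfl⟩ := hi
    simp only [hA, mem_union, mem_image] at hi'
    rcases hi' with h | ⟨k, hk, e⟩
    · exact hj' h
    · have : k = j + 1 := by omega
      subst this
      exact hadj j hj hk
  have hsub : (T ∪ A) ∪ B ⊆ Icc lo hi := by
    intro i hi
    simp only [hA, hB, mem_union, mem_image, mem_filter] at hi
    rw [mem_Icc]
    rcases hi with (h | ⟨j, h, rfl⟩) | ⟨j, ⟨h, _⟩, rfl⟩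
    · have := hlo _ h; have := hhi _ h; omega
    · have := hlo _ h; have := hhi _ h; omega
    · have := hlo _ h; have := hhi _ h; omega
  have hc := Finset.card_le_card hsub
  rw [Finset.card_union_of_disjoint dAB, Finset.card_union_of_disjoint dTA, Nat.card_Icc] at hc
  obtain ⟨i, hi'⟩ := hne
  have h1 := hlo i hi'
  have h2 := hhi i hi'
  have : 3 * T.card + lo ≤ hi + 1 + (T.filter fun i => i + 2 ∈ T).card := by omega
  have : (3 * T.card + lo : ℚ) ≤ hi + 1 + (T.filter fun i => i + 2 ∈ T).card := by exact_mod_cast this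
  linarith

lemma adj_of_pos (S : Finset ℕ) (a b : ℕ) (h : p N S a b ≠ 0) (i : ℕ) (h1 : a < i) (h2 : i + 2 < b)
    (h3 : i ∈ S) : i + 1 ∉ S := by
  intro h4
  apply h
  refine pr_false fun σ hW => ?_
  have e1 := ((hW i h1 (by omega)).mpr h3).2
  have e2 := ((hW (i+1) (by omega) (by omega)).mpr h4).1
  simp only [Nat.add_sub_cancel] at e2
  omega

def Emp (S : Finset ℕ) (a b : ℕ) : Prop := ∀ i ∈ S, a < i → i + 1 < b → False

def Bd (N : ℕ) (S : Finset ℕ) (a b : ℕ) : Prop :=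
  p N S a b ≤ F (b - a + 1) ∨ (b = a + 3 ∧ Emp S a b ∧ p N S a b ≤ 2/3)

lemma F_four : F 4 = 3/5 := by
  have := F1 1; norm_num at this; exact this

lemma Bd.side_left {S : Finset ℕ} {a b i : ℕ} (h1 : a < i) (hi : i + 1 < b)
    (hS : i ∈ S)
    (hadj : ∀ j ∈ S, a < j → j + 2 < b → j + 1 ∉ S)
    (B1 : Bd N S a i) (B2 : Bd N S a (i+1)) :
    Side (i - a + 1) (p N S a i) (if a < i - 2 ∧ i - 2 ∈ S then 1 else 0)
      (if i = a + 3 ∧ a + 1 ∉ S ∧ a + 2 ∉ S then 1 else 0) := by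
  by_cases hl : i = a + 3 ∧ a + 1 ∉ S ∧ a + 2 ∉ S
  · right; right
    rw [if_neg, if_pos hl]
    · refine ⟨rfl, rfl, by omega, ?_⟩
      rcases B1 with h | h
      · rw [show i - a + 1 = 4 by omega, F_four] at h
        linarith
      · exact h.2.2
    · rintro ⟨_, h⟩
      rw [hl.1] at h
      exact hl.2.1 h
  rw [if_neg hl]
  by_cases hs : a < i - 2 ∧ i - 2 ∈ S
  · right; left
    rw [if_pos hs]
    refine ⟨rfl, rfl, ?_⟩
    have hn : i - 1 ∉ S := by
      have := hadj (i-2) hs.2 hs.1 (by omega)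
      rwa [show i - 2 + 1 = i - 1 by omega] at this
    rw [p_right S a i hs.2 (by omega) hn]
    rcases B2 with h | h
    · rwa [show i + 1 - a + 1 = i - a + 1 + 1 by omega] at h
    · exact (h.2.1 (i-2) hs.2 hs.1 (by omega)).elim
  · left
    rw [if_neg hs]
    refine ⟨rfl, rfl, ?_⟩
    rcases B1 with h | h
    · exact h
    · exfalso
      refine hl ⟨h.1, fun h' => h.2.1 _ h' (by omega) (by omega), fun h' => ?_⟩
      have h2 := hadj (a+2) h' (by omega) (by omega)
      rw [show a + 2 + 1 = i by omega] at h2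
      exact h2 hS

lemma Bd.side_right {S : Finset ℕ} {a b i : ℕ} (h1 : a < i) (hi : i + 1 < b)
    (hS : i ∈ S)
    (hadj : ∀ j ∈ S, a < j → j + 2 < b → j + 1 ∉ S)
    (B1 : Bd N S (i+1) b) (B2 : Bd N S i b) :
    Side (b - i) (p N S (i+1) b) (if i + 3 < b ∧ i + 2 ∈ S then 1 else 0)
      (if i + 4 = b ∧ b - 2 ∉ S ∧ b - 3 ∉ S then 1 else 0) := by
  by_cases hl : i + 4 = b ∧ b - 2 ∉ S ∧ b - 3 ∉ S
  · right; right
    rw [if_neg, if_pos hl]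
    · refine ⟨rfl, rfl, by omega, ?_⟩
      rcases B1 with h | h
      · rw [show b - (i+1) + 1 = 4 by omega, F_four] at h
        linarith
      · exact h.2.2
    · rintro ⟨_, h⟩
      rw [show i + 2 = b - 2 by omega] at h
      exact hl.2.1 h
  rw [if_neg hl]
  by_cases hs : i + 3 < b ∧ i + 2 ∈ S
  · right; left
    rw [if_pos hs]
    refine ⟨rfl, rfl, ?_⟩
    have hn : i + 1 ∉ S := hadj i hS h1 (by omega)
    rw [p_left S i b hs.2 hs.1 hn]
    rcases B2 with h | h
    · exact h
    · exact (h.2.1 (i+2) hs.2 (by omega) (by omega)).elim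
  · left
    rw [if_neg hs]
    refine ⟨rfl, rfl, ?_⟩
    rcases B1 with h | h
    · rwa [show b - (i+1) + 1 = b - i by omega] at h
    · exfalso
      refine hl ⟨by omega, fun h' => h.2.1 _ h' (by omega) (by omega), fun h' => ?_⟩
      have h2 := hadj i hS (by omega) (by omega)
      rw [show b - 3 = i + 1 by omega] at h'
      exact h2 h'

lemma sum_bound (S : Finset ℕ) (a b : ℕ)
    (IH : ∀ a' b', a ≤ a' → a' ≤ b' → b' ≤ b → b' - a' < b - a → Bd N S a' b')
    (hadj : ∀ j ∈ S, a < j → j + 2 < b → j + 1 ∉ S) (T : Finset ℕ)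
    (hT : T = (Ioo a (b-1)).filter (· ∈ S)) :
    ∑ i ∈ T, p N S a i * p N S (i+1) b ≤ F (b - a + 1) *
      (3 * (T.card : ℚ) - ((T.filter fun i => i + 2 ∈ T).card : ℚ)
        + (if a + 1 ∉ S ∧ a + 2 ∉ S then 1/3 else 0) + (if b - 2 ∉ S ∧ b - 3 ∉ S then 1/3 else 0)) := by
  have mem : ∀ i, i ∈ T ↔ (a < i ∧ i + 1 < b) ∧ i ∈ S := by
    intro i
    rw [hT, mem_filter, mem_Ioo]
    constructor
    · rintro ⟨h1, h2⟩; exact ⟨by omega, h2⟩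
    · rintro ⟨h1, h2⟩; exact ⟨by omega, h2⟩
  have step : ∀ i ∈ T, p N S a i * p N S (i+1) b ≤ F (b - a + 1) *
      (3 - ((if i - 2 ∈ T then 1 else 0) + (if i + 2 ∈ T then 1 else 0))/2
        + ((if i = a + 3 ∧ a + 1 ∉ S ∧ a + 2 ∉ S then 1 else 0) +
          (if i + 4 = b ∧ b - 2 ∉ S ∧ b - 3 ∉ S then 1 else 0))/3) := by
    intro i hi
    obtain ⟨⟨h1, h2⟩, hS⟩ := (mem i).mp hi
    have L := Bd.side_left h1 h2 hS hadj (IH a i le_rfl (by omega) (by omega) (by omega))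
      (IH a (i+1) le_rfl (by omega) (by omega) (by omega))
    have R := Bd.side_right h1 h2 hS hadj (IH (i+1) b (by omega) (by omega) (by omega) (by omega))
      (IH i b (by omega) (by omega) (by omega) (by omega))
    have := split_bound L R (p_nonneg _ _ _)
    rw [show i - a + 1 + (b - i) = b - a + 1 by omega] at this
    have e1 : (i - 2 ∈ T) ↔ (a < i - 2 ∧ i - 2 ∈ S) := by
      rw [mem]; constructor
      · rintro ⟨h, h'⟩; exact ⟨h.1, h'⟩
      · rintro ⟨h, h'⟩; exact ⟨by omega, h'⟩
    have e2 : (i + 2 ∈ T) ↔ (i + 3 < b ∧ i + 2 ∈ S) := by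
      rw [mem]; constructor
      · rintro ⟨h, h'⟩; exact ⟨h.2, h'⟩
      · rintro ⟨h, h'⟩; exact ⟨by omega, h'⟩
    simp only [e1, e2]
    exact this
  refine (Finset.sum_le_sum step).trans ?_
  rw [← Finset.mul_sum]
  refine mul_le_mul_of_nonneg_left ?_ (F_pos _).le
  rw [Finset.sum_add_distrib, Finset.sum_sub_distrib, Finset.sum_const, ← Finset.sum_div,
    ← Finset.sum_div, Finset.sum_add_distrib, Finset.sum_add_distrib, nsmul_eq_mul]
  have s1 : ∑ i ∈ T, (if i + 2 ∈ T then (1:ℚ) else 0) = ((T.filter fun i => i + 2 ∈ T).card : ℚ) := by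
    rw [Finset.card_filter]; push_cast; rfl
  have s2 : ∑ i ∈ T, (if i - 2 ∈ T then (1:ℚ) else 0) = ((T.filter fun i => i + 2 ∈ T).card : ℚ) := by
    rw [← Finset.sum_filter, Finset.sum_const, nsmul_eq_mul, mul_one]
    congr 1
    symm
    refine Finset.card_bij (fun i _ => i + 2) ?_ ?_ ?_
    · intro i hi
      rw [mem_filter] at hi ⊢
      exact ⟨hi.2, by simpa using hi.1⟩
    · intro i _ j _ e; omega
    · intro i hi
      rw [mem_filter] at hi
      have := (mem _).mp hi.2
      refine ⟨i - 2, ?_, by omega⟩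
      rw [mem_filter, show i - 2 + 2 = i by omega]
      exact ⟨hi.2, hi.1⟩
  have s3 : ∑ i ∈ T, (if i = a + 3 ∧ a + 1 ∉ S ∧ a + 2 ∉ S then (1:ℚ) else 0)
      ≤ (if a + 1 ∉ S ∧ a + 2 ∉ S then 1 else 0) := by
    by_cases h : a + 1 ∉ S ∧ a + 2 ∉ S
    · simp only [h, not_false_eq_true, and_self, and_true, if_true]
      rw [Finset.sum_ite_eq']
      split_ifs <;> norm_num
    · simp [h]
  have s4 : ∑ i ∈ T, (if i + 4 = b ∧ b - 2 ∉ S ∧ b - 3 ∉ S then (1:ℚ) else 0)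
      ≤ (if b - 2 ∉ S ∧ b - 3 ∉ S then 1 else 0) := by
    by_cases h : b - 2 ∉ S ∧ b - 3 ∉ S
    · simp only [h, not_false_eq_true, and_self, and_true, if_true]
      calc ∑ i ∈ T, (if i + 4 = b then (1:ℚ) else 0)
          ≤ ∑ i ∈ T, (if i = b - 4 then (1:ℚ) else 0) := by
            refine Finset.sum_le_sum fun i _ => ?_
            split_ifs <;> first | omega | norm_num
        _ ≤ 1 := by
          rw [Finset.sum_ite_eq']
          split_ifs <;> norm_num
    · simp [h]
  rw [s1, s2]
  have q1 : (if a + 1 ∉ S ∧ a + 2 ∉ S then (1/3:ℚ) else 0) = (if a + 1 ∉ S ∧ a + 2 ∉ S then 1 else 0)/3 := by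
    split_ifs <;> norm_num
  have q2 : (if b - 2 ∉ S ∧ b - 3 ∉ S then (1/3:ℚ) else 0) = (if b - 2 ∉ S ∧ b - 3 ∉ S then 1 else 0)/3 := by
    split_ifs <;> norm_num
  rw [q1, q2]
  linarith

lemma final_arith (X f n K eL eR tL tR : ℚ) (zL zR : ℚ) (hf : 0 < f) (hn : 3 ≤ n)
    (h : n * X ≤ f * (K + eL + eR) + tL + tR)
    (hK : K ≤ n - zL - zR)
    (hL : (zL = 0 ∧ eL = 0 ∧ tL ≤ 0) ∨ (zL = 1 ∧ eL = 0 ∧ tL ≤ X) ∨ (zL = 2 ∧ eL = 1/3 ∧ tL ≤ 5/3 * f))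
    (hR : (zR = 0 ∧ eR = 0 ∧ tR ≤ 0) ∨ (zR = 1 ∧ eR = 0 ∧ tR ≤ X) ∨ (zR = 2 ∧ eR = 1/3 ∧ tR ≤ 5/3 * f)) :
    X ≤ f := by
  have hK' := mul_le_mul_of_nonneg_left hK hf.le
  by_contra hX
  push Not at hX
  have e := mul_lt_mul_of_pos_left hX (show (0:ℚ) < n - 2 by linarith)
  have e' := mul_lt_mul_of_pos_left hX (show (0:ℚ) < n by linarith)
  rcases hL with ⟨rfl, rfl, h1⟩ | ⟨rfl, rfl, h1⟩ | ⟨rfl, rfl, h1⟩ <;>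
  rcases hR with ⟨rfl, rfl, h2⟩ | ⟨rfl, rfl, h2⟩ | ⟨rfl, rfl, h2⟩ <;> nlinarith

lemma bound_all (S : Finset ℕ) : ∀ n a b, b - a = n → a ≤ b → b ≤ N → Bd N S a b := by
  intro n
  induction n using Nat.strong_induction_on with
  | _ n ih =>
  intro a b hn hab hb
  have IH : ∀ a' b', a ≤ a' → a' ≤ b' → b' ≤ b → b' - a' < b - a → Bd N S a' b' :=
    fun a' b' _ h2 h3 h4 => ih (b' - a') (by omega) a' b' rfl h2 (by omega)
  by_cases hsm : n ≤ 2
  · left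
    rw [p_small S a b (by omega), hn]
    interval_cases n
    · have := F1 0; norm_num at this; rw [this]; norm_num
    · have := F2 0; norm_num at this; rw [this]; norm_num
    · have := F3 0; norm_num at this; rw [this]
  push Not at hsm
  by_cases hz : p N S a b = 0
  · left; rw [hz]; exact (F_pos _).le
  have hadj : ∀ j ∈ S, a < j → j + 2 < b → j + 1 ∉ S :=
    fun j h1 h2 h3 => adj_of_pos S a b hz j h2 h3 h1
  have hrec := max_rec (N := N) S a b (by omega) hb
  have hsb := sum_bound S a b IH hadj _ rfl
  generalize hT : (Ioo a (b-1)).filter (· ∈ S) = T at hrec hsb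
  have mem : ∀ i, i ∈ T ↔ (a < i ∧ i + 1 < b) ∧ i ∈ S := by
    intro i
    rw [← hT, mem_filter, mem_Ioo]
    constructor
    · rintro ⟨h1, h2⟩; exact ⟨by omega, h2⟩
    · rintro ⟨h1, h2⟩; exact ⟨by omega, h2⟩
  have hnq : ((b - a : ℕ) : ℚ) = (n : ℚ) := by rw [hn]
  have BL := IH (a+1) b (by omega) (by omega) le_rfl (by omega)
  have BR := IH a (b-1) le_rfl (by omega) (by omega) (by omega)
  have hst : F n ≤ 5/3 * F (n+1) := F_step n
  rcases T.eq_empty_or_nonempty with he | hne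
  · have hemp : Emp S a b := by
      intro i h1 h2 h3
      have := (mem i).mpr ⟨⟨h2, h3⟩, h1⟩
      rw [he] at this
      simp at this
    have hA : a + 1 ∉ S := fun h => hemp _ h (by omega) (by omega)
    have hB : b - 2 ∉ S := fun h => hemp _ h (by omega) (by omega)
    rw [he, Finset.sum_empty, if_neg hA, if_neg hB, hnq] at hrec
    by_cases h3 : n = 3
    · right
      refine ⟨by omega, hemp, ?_⟩
      rw [p_small S (a+1) b (by omega), p_small S a (b-1) (by omega), h3] at hrec
      push_cast at hrec
      linarith
    · left
      rw [hn]
      by_cases h4 : n = 4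
      · have e5 : F 5 = 2/5 := by have := F2 1; norm_num at this; exact this
        have b1 : p N S (a+1) b ≤ 2/3 := by
          rcases BL with h | h
          · rw [show b - (a+1) + 1 = 4 by omega, F_four] at h; linarith
          · exact h.2.2
        have b2 : p N S a (b-1) ≤ 2/3 := by
          rcases BR with h | h
          · rw [show b - 1 - a + 1 = 4 by omega, F_four] at h; linarith
          · exact h.2.2
        rw [h4] at hrec ⊢
        rw [e5]
        push_cast at hrec
        linarith
      · have b1 : p N S (a+1) b ≤ F n := by
          rcases BL with h | h
          · rwa [show b - (a+1) + 1 = n by omega] at h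
          · omega
        have b2 : p N S a (b-1) ≤ F n := by
          rcases BR with h | h
          · rwa [show b - 1 - a + 1 = n by omega] at h
          · omega
        have h5 : (5:ℚ) ≤ n := by
          have : 5 ≤ n := by omega
          exact_mod_cast this
        have hp := p_nonneg (N := N) S a b
        have hF := F_pos (n+1)
        have := mul_le_mul_of_nonneg_right h5 hp
        linarith
  · left
    obtain ⟨i0, hi0⟩ := id hne
    obtain ⟨⟨hi1, hi2⟩, hi3⟩ := (mem i0).mp hi0
    rw [hn] at hsb ⊢
    rw [hnq] at hrec
    have hadjT : ∀ i ∈ T, i + 1 ∉ T := by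
      intro i hi hi'
      have h1 := (mem _).mp hi
      have h2 := (mem _).mp hi'
      exact hadj i h1.2 h1.1.1 (by omega) h2.2
    have left : ∃ lo : ℕ, (∀ i ∈ T, a + 1 + lo ≤ i) ∧
      (((lo:ℚ) = 0 ∧ (if a + 1 ∉ S ∧ a + 2 ∉ S then (1/3:ℚ) else 0) = 0 ∧
          (if a + 1 ∈ S then 0 else p N S (a+1) b) ≤ 0) ∨
       ((lo:ℚ) = 1 ∧ (if a + 1 ∉ S ∧ a + 2 ∉ S then (1/3:ℚ) else 0) = 0 ∧
          (if a + 1 ∈ S then 0 else p N S (a+1) b) ≤ p N S a b) ∨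
       ((lo:ℚ) = 2 ∧ (if a + 1 ∉ S ∧ a + 2 ∉ S then (1/3:ℚ) else 0) = 1/3 ∧
          (if a + 1 ∈ S then 0 else p N S (a+1) b) ≤ 5/3 * F (n+1))) := by
      by_cases c1 : a + 1 ∈ S
      · refine ⟨0, fun i hi => ?_, Or.inl (by simp [c1])⟩
        have := (mem _).mp hi; omega
      · have g1 : ∀ i ∈ T, a + 2 ≤ i := fun i hi => by
          have h := (mem _).mp hi
          have : i ≠ a + 1 := by rintro rfl; exact c1 h.2
          omega
        by_cases c2 : a + 2 ∈ S
        · refine ⟨1, fun i hi => by have := g1 i hi; omega, Or.inr (Or.inl ?_)⟩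
          have := g1 i0 hi0
          simp only [c1, c2, if_false, not_true_eq_false, and_false, Nat.cast_one, true_and]
          exact (p_left S a b c2 (by omega) c1).le
        · have g2 : ∀ i ∈ T, a + 3 ≤ i := fun i hi => by
            have h := (mem _).mp hi
            have := g1 i hi
            have : i ≠ a + 2 := by rintro rfl; exact c2 h.2
            omega
          refine ⟨2, fun i hi => by have := g2 i hi; omega, Or.inr (Or.inr ?_)⟩
          have := g2 i0 hi0
          simp only [c1, c2, if_false, not_false_eq_true, and_self, if_true, Nat.cast_ofNat, true_and]
          rcases BL with h | h
          · rw [show b - (a+1) + 1 = n by omega] at h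
            exact h.trans hst
          · exact (h.2.1 i0 hi3 (by omega) hi2).elim
    have right : ∃ hi : ℕ, (∀ i ∈ T, i + 2 + hi ≤ b) ∧
      (((hi:ℚ) = 0 ∧ (if b - 2 ∉ S ∧ b - 3 ∉ S then (1/3:ℚ) else 0) = 0 ∧
          (if b - 2 ∈ S then 0 else p N S a (b-1)) ≤ 0) ∨
       ((hi:ℚ) = 1 ∧ (if b - 2 ∉ S ∧ b - 3 ∉ S then (1/3:ℚ) else 0) = 0 ∧
          (if b - 2 ∈ S then 0 else p N S a (b-1)) ≤ p N S a b) ∨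
       ((hi:ℚ) = 2 ∧ (if b - 2 ∉ S ∧ b - 3 ∉ S then (1/3:ℚ) else 0) = 1/3 ∧
          (if b - 2 ∈ S then 0 else p N S a (b-1)) ≤ 5/3 * F (n+1))) := by
      by_cases c1 : b - 2 ∈ S
      · refine ⟨0, fun i hi => ?_, Or.inl (by simp [c1])⟩
        have := (mem _).mp hi; omega
      · have g1 : ∀ i ∈ T, i + 3 ≤ b := fun i hi => by
          have h := (mem _).mp hi
          have : i ≠ b - 2 := by rintro rfl; exact c1 h.2
          omega
        by_cases c2 : b - 3 ∈ S
        · refine ⟨1, fun i hi => by have := g1 i hi; omega, Or.inr (Or.inl ?_)⟩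
          have := g1 i0 hi0
          simp only [c1, c2, if_false, not_true_eq_false, and_false, Nat.cast_one, true_and]
          have e := p_right (N := N) S a (b-1) (by rwa [show b - 1 - 2 = b - 3 by omega]) (by omega)
            (by rwa [show b - 1 - 1 = b - 2 by omega])
          rw [show b - 1 + 1 = b by omega] at e
          exact e.le
        · have g2 : ∀ i ∈ T, i + 4 ≤ b := fun i hi => by
            have h := (mem _).mp hi
            have := g1 i hi
            have : i ≠ b - 3 := by rintro rfl; exact c2 h.2
            omega
          refine ⟨2, fun i hi => by have := g2 i hi; omega, Or.inr (Or.inr ?_)⟩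
          have := g2 i0 hi0
          simp only [c1, c2, if_false, not_false_eq_true, and_self, if_true, Nat.cast_ofNat, true_and]
          rcases BR with h | h
          · rw [show b - 1 - a + 1 = n by omega] at h
            exact h.trans hst
          · exact (h.2.1 i0 hi3 (by omega) (by omega)).elim
    obtain ⟨lo, hlo, cL⟩ := left
    obtain ⟨hi, hhi, cR⟩ := right
    have hct := count_T T (a+1+lo) (b-hi) hadjT hne hlo (fun i h => by have := hhi i h; omega)
    have hle : hi ≤ b := by have := hhi i0 hi0; omega
    have hbq : (b:ℚ) = n + a := by
      have : b = n + a := by omega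
      exact_mod_cast this
    rw [Nat.cast_sub hle, hbq] at hct
    push_cast at hct
    refine final_arith _ _ (n:ℚ)
      (3 * (T.card : ℚ) - ((T.filter fun i => i + 2 ∈ T).card : ℚ)) _ _ _ _ (lo:ℚ) (hi:ℚ) (F_pos _) (by exact_mod_cast hsm) ?_ ?_ cL cR
    · linarith
    · linarith


lemma isPeak_iff (σ : Perm (Fin N)) (i : ℕ) : IsPeak σ i ↔ 2 ≤ i ∧ i < N ∧ Pk σ (i-1) := by
  unfold IsPeak Pk
  constructor
  · rintro ⟨h2, h3, h4, h5⟩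
    refine ⟨h2, h3, ?_, ?_⟩
    · rw [val_eq σ (by omega), val_eq σ (by omega)]
      exact h4
    · rw [val_eq σ (i := i-1+1) (by omega), val_eq σ (i := i-1) (by omega)]
      have e : (⟨i-1+1, by omega⟩ : Fin N) = ⟨i, h3⟩ := Fin.ext (by simp; omega)
      rw [e]
      exact h5
  · rintro ⟨h2, h3, h4, h5⟩
    refine ⟨h2, h3, ?_, ?_⟩
    · rw [val_eq σ (by omega), val_eq σ (by omega)] at h4
      exact h4
    · rw [val_eq σ (i := i-1+1) (by omega), val_eq σ (i := i-1) (by omega)] at h5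
      have e : (⟨i-1+1, by omega⟩ : Fin N) = ⟨i, h3⟩ := Fin.ext (by simp; omega)
      rw [e] at h5
      exact h5

lemma mem_peakSet (σ : Perm (Fin N)) (i : ℕ) : i ∈ peakSet σ ↔ 2 ≤ i ∧ i < N ∧ Pk σ (i-1) := by
  unfold peakSet
  rw [mem_filter, isPeak_iff, mem_range]
  tauto

lemma numPeakSet_eq (S : Finset ℕ) :
    (numPeakSet N S : ℚ) = pr (fun σ : Perm (Fin N) => peakSet σ = S) * N.factorial := by
  have hN : (N.factorial : ℚ) ≠ 0 := by exact_mod_cast N.factorial_ne_zero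
  unfold numPeakSet pr
  rw [Nat.card_eq_fintype_card, Fintype.card_subtype, div_mul_cancel₀ _ hN]
  congr

lemma upper (ℓ : ℕ) (hℓ : 2 ≤ ℓ) (S : Finset ℕ) :
    pr (fun σ : Perm (Fin (3*ℓ+1)) => peakSet σ = S) ≤ 6/5 * (1/3)^ℓ := by
  set S' := (range (3*ℓ+1)).filter (fun i => i + 1 ∈ S) with hS'
  have h1 : pr (fun σ : Perm (Fin (3*ℓ+1)) => peakSet σ = S) ≤ p (3*ℓ+1) S' 0 (3*ℓ+1) := by
    refine pr_mono fun σ hσ i h1 h2 => ?_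
    have := mem_peakSet σ (i+1)
    rw [hσ, Nat.add_sub_cancel] at this
    rw [hS', mem_filter, mem_range, this]
    constructor
    · intro h; exact ⟨by omega, by omega, by omega, h⟩
    · intro h; exact h.2.2.2
  refine h1.trans ?_
  rcases bound_all (N := 3*ℓ+1) S' (3*ℓ+1) 0 (3*ℓ+1) (by omega) (by omega) le_rfl with h | h
  · rw [← F2]
    exact h
  · omega

lemma Mx_same (a b i : ℕ) (hi : a ≤ i ∧ i < b) (σ τ : Perm (Fin N)) (h : SameOrd a b σ τ)
    (hM : Mx a b i σ) : Mx a b i τ := by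
  intro j h1 h2 h3
  rw [← h j i h1 h2 hi.1 hi.2]
  exact hM j h1 h2 h3

lemma Mx_Pk {a b i : ℕ} {σ : Perm (Fin N)} (hM : Mx a b i σ) (h1 : a < i) (h2 : i + 1 < b) :
    Pk σ i :=
  ⟨hM _ (by omega) (by omega) (by omega), hM _ (by omega) (by omega) (by omega)⟩

lemma quint (hN : 6 ≤ N) : 2/15 ≤ pr (fun σ : Perm (Fin N) => Pk σ 2 ∧ Pk σ 4) := by
  rw [pr_split (N := N) 1 6 (by omega) hN]
  have hsub : ({2, 4} : Finset ℕ) ⊆ Ico 1 6 := by decide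
  refine le_trans ?_ (Finset.sum_le_sum_of_subset_of_nonneg hsub fun i _ _ => pr_nonneg _)
  rw [Finset.sum_pair (by norm_num)]
  have a1 := indep (N := N) 3 6 hN (Mx 1 6 2) (Mx 3 6 4)
    (fun σ h hh => Mx_supp 1 6 2 3 6 (by omega) (by omega) hN (by omega) σ h hh)
    (fun σ τ => Mx_same 3 6 4 (by omega) σ τ)
  have a2 := indep (N := N) 1 4 (by omega) (Mx 1 6 4) (Mx 1 4 2)
    (fun σ h hh => Mx_supp 1 6 4 1 4 (by omega) (by omega) hN (by omega) σ h hh)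
    (fun σ τ => Mx_same 1 4 2 (by omega) σ τ)
  rw [pr_Mx 1 6 2 hN (by omega), pr_Mx 3 6 4 hN (by omega)] at a1
  rw [pr_Mx 1 6 4 hN (by omega), pr_Mx 1 4 2 (by omega) (by omega)] at a2
  have b1 : pr (fun σ : Perm (Fin N) => Mx 1 6 2 σ ∧ Mx 3 6 4 σ) ≤
      pr (fun σ : Perm (Fin N) => (Pk σ 2 ∧ Pk σ 4) ∧ Mx 1 6 2 σ) :=
    pr_mono fun σ h => ⟨⟨Mx_Pk h.1 (by omega) (by omega), Mx_Pk h.2 (by omega) (by omega)⟩, h.1⟩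
  have b2 : pr (fun σ : Perm (Fin N) => Mx 1 6 4 σ ∧ Mx 1 4 2 σ) ≤
      pr (fun σ : Perm (Fin N) => (Pk σ 2 ∧ Pk σ 4) ∧ Mx 1 6 4 σ) :=
    pr_mono fun σ h => ⟨⟨Mx_Pk h.2 (by omega) (by omega), Mx_Pk h.1 (by omega) (by omega)⟩, h.1⟩
  norm_num at a1 a2
  linarith

lemma Pk_supp (i c d : ℕ) (hi : i + 1 < c) (σ h : Perm (Fin N)) (hh : Supp c d h) (hP : Pk σ i) :
    Pk (σ * h) i := by
  unfold Pk
  rw [hh.val_out σ (i := i-1) (by omega), hh.val_out σ (i := i) (by omega),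
    hh.val_out σ (i := i+1) (by omega)]
  exact hP

lemma chain (t : ℕ) (hN : 6 + 3*t ≤ N) :
    2/15 * (1/3)^t ≤ pr (fun σ : Perm (Fin N) => (Pk σ 2 ∧ Pk σ 4) ∧ ∀ j < t, Pk σ (7+3*j)) := by
  induction t with
  | zero =>
    refine le_trans (by simpa using quint (N := N) (by omega)) (pr_mono fun σ h => ⟨h, ?_⟩)
    intro j hj
    omega
  | succ t ih =>
    have ih := ih (by omega)
    have a1 := indep (N := N) (6+3*t) (9+3*t) (by omega)
      (fun σ => (Pk σ 2 ∧ Pk σ 4) ∧ ∀ j < t, Pk σ (7+3*j)) (Mx (6+3*t) (9+3*t) (7+3*t))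
      (fun σ h hh hE => ⟨⟨Pk_supp _ _ _ (by omega) σ h hh hE.1.1, Pk_supp _ _ _ (by omega) σ h hh hE.1.2⟩,
        fun j hj => Pk_supp _ _ _ (by omega) σ h hh (hE.2 j hj)⟩)
      (fun σ τ => Mx_same _ _ _ (by omega) σ τ)
    rw [pr_Mx _ _ _ (by omega) (by omega), show 9 + 3*t - (6+3*t) = 3 by omega] at a1
    have b1 : pr (fun σ : Perm (Fin N) => ((Pk σ 2 ∧ Pk σ 4) ∧ ∀ j < t, Pk σ (7+3*j)) ∧
        Mx (6+3*t) (9+3*t) (7+3*t) σ) ≤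
        pr (fun σ : Perm (Fin N) => (Pk σ 2 ∧ Pk σ 4) ∧ ∀ j < t + 1, Pk σ (7+3*j)) := by
      refine pr_mono fun σ h => ⟨h.1.1, fun j hj => ?_⟩
      rcases Nat.lt_succ_iff_lt_or_eq.mp hj with h' | h'
      · exact h.1.2 j h'
      · subst h'
        exact Mx_Pk h.2 (by omega) (by omega)
    rw [a1] at b1
    refine le_trans ?_ b1
    rw [pow_succ]
    push_cast
    linarith

def optS (ℓ : ℕ) : Finset ℕ := insert 3 ((range (ℓ-1)).image (fun j => 5 + 3*j))

lemma mem_optS (ℓ i : ℕ) : i ∈ optS ℓ ↔ i = 3 ∨ ∃ j, j < ℓ - 1 ∧ 5 + 3*j = i := by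
  simp [optS]

lemma lower (ℓ : ℕ) (hℓ : 2 ≤ ℓ) :
    2/15 * (1/3)^(ℓ-2) ≤ pr (fun σ : Perm (Fin (3*ℓ+1)) => peakSet σ = optS ℓ) := by
  refine (chain (N := 3*ℓ+1) (ℓ-2) (by omega)).trans (pr_mono fun σ h => ?_)
  obtain ⟨⟨h2, h4⟩, h7⟩ := h
  have pk : ∀ i, i ∈ optS ℓ → Pk σ (i-1) := by
    intro i hi
    rw [mem_optS] at hi
    rcases hi with rfl | ⟨j, hj, rfl⟩
    · exact h2
    · rcases j with _ | j
      · exact h4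
      · have := h7 j (by omega)
        rwa [show 5 + 3*(j+1) - 1 = 7 + 3*j by omega]
  have nadj : ∀ i, Pk σ i → ¬ Pk σ (i+1) := by
    intro i h h'
    have e1 := h.2
    have e2 := h'.1
    simp only [Nat.add_sub_cancel] at e2
    omega
  ext i
  rw [mem_peakSet]
  constructor
  · rintro ⟨g1, g2, g3⟩
    by_contra hc
    have c1 : i - 1 ∉ optS ℓ := by
      intro h
      by_cases hi2 : i = 2
      · subst hi2
        rw [mem_optS] at h
        omega
      have := nadj _ (pk _ h)
      rw [show i - 1 - 1 + 1 = i - 1 by omega] at this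
      exact this g3
    have c2 : i + 1 ∉ optS ℓ := by
      intro h
      have := nadj _ g3
      rw [show i - 1 + 1 = i + 1 - 1 by omega] at this
      exact this (pk _ h)
    rw [mem_optS] at hc c1 c2
    push Not at hc c1 c2
    have d0 := hc.2 ((i-5)/3)
    have d1 := c1.2 ((i-6)/3)
    have d2 := c2.2 ((i-4)/3)
    have := hc.1
    have := c1.1
    have := c2.1
    omega
  · intro h
    refine ⟨?_, ?_, pk i h⟩
    · rw [mem_optS] at h; omega
    · rw [mem_optS] at h; omega

end
end PeakMax

theorem max_peak_set_count_mod_one (ℓ n : ℕ) (hℓ : 2 ≤ ℓ) (hn : n = 3 * ℓ + 1) :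
    5 * 3 ^ (ℓ - 1) *
      ((Finset.Icc 1 n).powerset.sup fun S => numPeakSet n S) = 2 * Nat.factorial n := by
  subst hn
  obtain ⟨k, rfl⟩ : ∃ k, ℓ = k + 2 := ⟨ℓ - 2, by omega⟩
  have h3 : (3:ℚ)^k * (1/3)^k = 1 := by
    rw [← mul_pow]; norm_num
  have e : k + 2 - 1 = k + 1 := by omega
  rw [e]
  apply le_antisymm
  · obtain ⟨S, _, hS⟩ := Finset.exists_mem_eq_sup (Finset.Icc 1 (3*(k+2)+1)).powerset
      ⟨∅, by simp⟩ (fun S => numPeakSet (3*(k+2)+1) S)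
    rw [hS]
    have h1 := PeakMax.upper (k+2) hℓ S
    have h2 := PeakMax.numPeakSet_eq (N := 3*(k+2)+1) S
    have hf : (0:ℚ) ≤ ((3*(k+2)+1).factorial : ℚ) := by positivity
    have h4 := mul_le_mul_of_nonneg_right h1 hf
    rw [← h2] at h4
    have : (5 * 3^(k+1) * (numPeakSet (3*(k+2)+1) S : ℚ)) ≤ 2 * ((3*(k+2)+1).factorial : ℚ) := by
      calc (5 * 3^(k+1) * (numPeakSet (3*(k+2)+1) S : ℚ))
          ≤ 5 * 3^(k+1) * (6/5 * (1/3)^(k+2) * ((3*(k+2)+1).factorial : ℚ)) := by gcongr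
        _ = 2 * (3^k * (1/3)^k) * ((3*(k+2)+1).factorial : ℚ) := by ring
        _ = _ := by rw [h3]; ring
    exact_mod_cast this
  · have hmem : PeakMax.optS (k+2) ∈ (Finset.Icc 1 (3*(k+2)+1)).powerset := by
      rw [Finset.mem_powerset]
      intro i hi
      rw [PeakMax.mem_optS] at hi
      rw [Finset.mem_Icc]
      rcases hi with rfl | ⟨j, hj, rfl⟩
      · constructor <;> omega
      · constructor <;> omega
    have hle := Finset.le_sup (f := fun S => numPeakSet (3*(k+2)+1) S) hmem
    refine le_trans ?_ (Nat.mul_le_mul_left _ hle)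
    have h1 := PeakMax.lower (k+2) hℓ
    have h2 := PeakMax.numPeakSet_eq (N := 3*(k+2)+1) (PeakMax.optS (k+2))
    have hf : (0:ℚ) ≤ ((3*(k+2)+1).factorial : ℚ) := by positivity
    have h4 := mul_le_mul_of_nonneg_right h1 hf
    rw [← h2, Nat.add_sub_cancel] at h4
    have : 2 * ((3*(k+2)+1).factorial : ℚ) ≤
        (5 * 3^(k+1) * (numPeakSet (3*(k+2)+1) (PeakMax.optS (k+2)) : ℚ)) := by
      calc 2 * ((3*(k+2)+1).factorial : ℚ)
          = 2 * (3^k * (1/3)^k) * ((3*(k+2)+1).factorial : ℚ) := by rw [h3]; ring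
        _ = 5 * 3^(k+1) * (2/15 * (1/3)^k * ((3*(k+2)+1).factorial : ℚ)) := by ring
        _ ≤ _ := by gcongr
    exact_mod_cast this
end

section
/- Let ℓ ≥ 2 and n = 3ℓ+2. The maximum of P(S;n) over all subsets S of {1,…,n} equals 3^{−ℓ}·n!, i.e. 3^{ℓ} times the maximum equals n!. -/
/-- Extension of a permutation of `Fin n` to a function on `ℕ` (junk value `0`). -/
def extF {n : ℕ} (σ : Equiv.Perm (Fin n)) (i : ℕ) : ℕ := if h : i < n then (σ ⟨i, h⟩ : ℕ) else 0

/-- The peak word of `f` on the window starting at `s` is `u`. -/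
def HW (f : ℕ → ℕ) (s : ℕ) (u : List Bool) : Prop :=
  ∀ j (h : j < u.length), (f (s + j) < f (s + j + 1) ∧ f (s + j + 2) < f (s + j + 1)) ↔ u[j] = true

instance (f : ℕ → ℕ) (s : ℕ) (u : List Bool) : Decidable (HW f s u) := by
  unfold HW; infer_instance

/-- Number of permutations of `Fin n` with peak word `u`. -/
def cnt (n : ℕ) (u : List Bool) : ℕ :=
  (Finset.univ.filter (fun σ : Equiv.Perm (Fin n) => HW (extF σ) 0 u)).card

theorem HW_congr {f g : ℕ → ℕ} {s s' a : ℕ} {u : List Bool} (hu : u.length = a - 2)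
    (h : ∀ j k, j < a → k < a → (f (s + j) < f (s + k) ↔ g (s' + j) < g (s' + k))) :
    HW f s u ↔ HW g s' u := by
  unfold HW
  refine forall_congr' fun j => forall_congr' fun hj => ?_
  have h1 := h j (j + 1) (by omega) (by omega)
  have h2 := h (j + 2) (j + 1) (by omega) (by omega)
  simp only [← add_assoc] at h1 h2
  rw [h1, h2]

theorem exists_pattern {n s a : ℕ} (hs : s + a ≤ n) (σ : Equiv.Perm (Fin n)) :
    ∃ π : Equiv.Perm (Fin a), ∀ j k : Fin a,
      (σ ⟨s + j, by omega⟩ < σ ⟨s + k, by omega⟩ ↔ π j < π k) := by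
  let g : Fin a → Fin n := fun j => σ ⟨s + j, by omega⟩
  have hg : Function.Injective g := by
    intro j k h
    have := σ.injective h
    simp at this
    exact Fin.ext this
  have hm : StrictMono (g ∘ Tuple.sort g) :=
    (Tuple.monotone_sort g).strictMono_of_injective (hg.comp (Tuple.sort g).injective)
  refine ⟨(Tuple.sort g)⁻¹, fun j k => ?_⟩
  have := hm.lt_iff_lt (a := (Tuple.sort g)⁻¹ j) (b := (Tuple.sort g)⁻¹ k)
  have e : ∀ x, (Tuple.sort g) ((Tuple.sort g)⁻¹ x) = x := fun x =>
    (Tuple.sort g).apply_symm_apply x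
  simp only [Function.comp, e] at this
  exact this

def emb {n s a : ℕ} (hs : s + a ≤ n) : Fin a ↪ Fin n :=
  ⟨fun j => ⟨s + j, by omega⟩, fun j k h => by simpa [Fin.ext_iff] using h⟩

def BlockInv {n : ℕ} (s a : ℕ) (E : Finset (Equiv.Perm (Fin n))) : Prop :=
  ∀ σ ∈ E, ∀ τ : Equiv.Perm (Fin n), (∀ x : Fin n, ((x : ℕ) < s ∨ s + a ≤ x) → τ x = x) → σ * τ ∈ E

theorem blockM {n s a : ℕ} (hs : s + a ≤ n) (u : List Bool) (hu : u.length = a - 2)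
    (E : Finset (Equiv.Perm (Fin n))) (hE : BlockInv s a E) :
    (E.filter (fun σ => HW (extF σ) s u)).card * a.factorial = E.card * cnt a u := by
  have hfix : ∀ (τ : Equiv.Perm (Fin a)) (x : Fin n), ((x : ℕ) < s ∨ s + a ≤ x) →
      τ.viaFintypeEmbedding (emb hs) x = x := by
    intro τ x hx
    apply Equiv.Perm.viaFintypeEmbedding_apply_notMem_range
    rintro ⟨j, rfl⟩
    have := j.2
    have e : ((emb hs j : Fin n) : ℕ) = s + j := rfl
    omega
  have happ : ∀ (τ : Equiv.Perm (Fin a)) (j : Fin a),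
      τ.viaFintypeEmbedding (emb hs) (emb hs j) = emb hs (τ j) := by
    intro τ j
    apply Equiv.Perm.viaFintypeEmbedding_apply_image
  have key : ∑ σ ∈ E, ∑ τ : Equiv.Perm (Fin a),
      (if HW (extF (σ * τ.viaFintypeEmbedding (emb hs))) s u then 1 else 0) =
      ∑ τ : Equiv.Perm (Fin a), ∑ σ ∈ E,
      (if HW (extF (σ * τ.viaFintypeEmbedding (emb hs))) s u then 1 else 0) := Finset.sum_comm
  have h1 : ∀ σ ∈ E, ∑ τ : Equiv.Perm (Fin a),
      (if HW (extF (σ * τ.viaFintypeEmbedding (emb hs))) s u then 1 else 0) = cnt a u := by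
    intro σ _
    obtain ⟨π, hπ⟩ := exists_pattern hs σ
    rw [cnt, Finset.card_filter]
    refine Fintype.sum_equiv (Equiv.mulLeft π) _ _ (fun τ => ?_)
    have : HW (extF (σ * τ.viaFintypeEmbedding (emb hs))) s u ↔
        HW (extF (Equiv.mulLeft π τ)) 0 u := by
      apply HW_congr hu
      intro j k hj hk
      have e : ∀ i (hi : i < a), extF (σ * τ.viaFintypeEmbedding (emb hs)) (s + i) =
          σ ⟨s + τ ⟨i, hi⟩, by omega⟩ := by
        intro i hi
        have := happ τ ⟨i, hi⟩
        rw [extF, dif_pos (by omega)]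
        simp only [Equiv.Perm.coe_mul, Function.comp]
        exact congrArg (fun x => (σ x : ℕ)) this
      have e' : ∀ i (hi : i < a), extF (Equiv.mulLeft π τ) (0 + i) = π (τ ⟨i, hi⟩) := by
        intro i hi
        rw [extF, dif_pos (by omega)]
        simp
      rw [e j hj, e k hk, e' j hj, e' k hk]
      exact hπ _ _
    simp only [this]
  have h2 : ∀ τ : Equiv.Perm (Fin a), ∑ σ ∈ E,
      (if HW (extF (σ * τ.viaFintypeEmbedding (emb hs))) s u then 1 else 0) =
      (E.filter (fun σ => HW (extF σ) s u)).card := by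
    intro τ
    rw [Finset.card_filter]
    refine Finset.sum_bij' (fun σ _ => σ * τ.viaFintypeEmbedding (emb hs))
      (fun σ _ => σ * (τ.viaFintypeEmbedding (emb hs))⁻¹) ?_ ?_ ?_ ?_ ?_
    · intro σ hσ; exact hE σ hσ _ (hfix τ)
    · intro σ hσ
      refine hE σ hσ _ (fun x hx => ?_)
      rw [Equiv.Perm.inv_eq_iff_eq, hfix τ x hx]
    · intro σ _; simp
    · intro σ _; simp
    · intro σ _; rfl
  rw [Finset.sum_congr rfl h1, Finset.sum_congr rfl (fun τ _ => h2 τ)] at key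
  simp only [Finset.sum_const, smul_eq_mul, Finset.card_univ, Fintype.card_perm,
    Fintype.card_fin] at key
  rw [key, mul_comm]

theorem extF_mul_of_fix {n : ℕ} (σ τ : Equiv.Perm (Fin n)) (i : ℕ)
    (h : ∀ x : Fin n, (x : ℕ) = i → τ x = x) : extF (σ * τ) i = extF σ i := by
  unfold extF
  split_ifs with hi
  · simp only [Equiv.Perm.coe_mul, Function.comp]
    rw [h ⟨i, hi⟩ rfl]
  · rfl

/-- Filtering on a disjoint window preserves block invariance. -/
theorem BlockInv.filter {n s a s' a' : ℕ} {E : Finset (Equiv.Perm (Fin n))} (hE : BlockInv s a E)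
    (u : List Bool) (hu : u.length = a' - 2) (hd : s + a ≤ s' ∨ s' + a' ≤ s) :
    BlockInv s a (E.filter (fun σ => HW (extF σ) s' u)) := by
  intro σ hσ τ hτ
  rw [Finset.mem_filter] at hσ ⊢
  refine ⟨hE σ hσ.1 τ hτ, (HW_congr (a := a') hu ?_).1 hσ.2⟩
  intro j k hj hk
  rw [extF_mul_of_fix σ τ, extF_mul_of_fix σ τ] <;>
  · intro x hx
    apply hτ
    omega

theorem BlockInv.univ {n s a : ℕ} : BlockInv s a (Finset.univ : Finset (Equiv.Perm (Fin n))) :=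
  fun _ _ _ _ => Finset.mem_univ _

theorem card_two_blocks {n s a s' a' : ℕ} (hs : s + a ≤ s') (hs' : s' + a' ≤ n)
    (u v : List Bool) (hu : u.length = a - 2) (hv : v.length = a' - 2)
    (E : Finset (Equiv.Perm (Fin n))) (hE : BlockInv s a E) (hE' : BlockInv s' a' E) :
    ((E.filter (fun σ => HW (extF σ) s' v)).filter (fun σ => HW (extF σ) s u)).card *
      (a.factorial * a'.factorial) = E.card * (cnt a u * cnt a' v) := by
  have h1 := blockM (s := s) (a := a) (n := n) (by omega) u hu
    (E.filter (fun σ => HW (extF σ) s' v)) (hE.filter v hv (Or.inl hs))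
  have h2 := blockM hs' v hv E hE'
  calc _ = (((E.filter (fun σ => HW (extF σ) s' v)).filter (fun σ => HW (extF σ) s u)).card *
      a.factorial) * a'.factorial := by ring
    _ = ((E.filter (fun σ => HW (extF σ) s' v)).card * a'.factorial) * cnt a u := by
      rw [h1]; ring
    _ = _ := by rw [h2]; ring

theorem HW_take {f : ℕ → ℕ} {s : ℕ} {w : List Bool} (h : HW f s w) (k : ℕ) : HW f s (w.take k) := by
  intro j hj
  rw [List.length_take] at hj
  have := h j (by omega)
  simpa using this

theorem HW_drop {f : ℕ → ℕ} {s : ℕ} {w : List Bool} (h : HW f s w) (k : ℕ) :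
    HW f (s + k) (w.drop k) := by
  intro j hj
  rw [List.length_drop] at hj
  have := h (k + j) (by omega)
  simpa [add_assoc] using this

theorem cnt_strip (w : List Bool) (n a : ℕ) (hn : n = w.length + 2) (ha : a ≤ w.length) :
    cnt n w * (a.factorial * (n - a).factorial) ≤
      n.factorial * (cnt a (w.take (a - 2)) * cnt (n - a) (w.drop a)) := by
  have := card_two_blocks (n := n) (s := 0) (a := a) (s' := a) (a' := n - a) (by omega) (by omega)
    (w.take (a - 2)) (w.drop a) (by rw [List.length_take]; omega) (by rw [List.length_drop]; omega)
    Finset.univ BlockInv.univ BlockInv.univ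
  rw [Finset.card_univ, Fintype.card_perm, Fintype.card_fin] at this
  rw [← this]
  apply Nat.mul_le_mul_right
  apply Finset.card_le_card
  intro σ hσ
  simp only [Finset.mem_filter, Finset.mem_univ, true_and] at hσ ⊢
  refine ⟨?_, HW_take hσ _⟩
  have := HW_drop hσ a
  simpa using this

theorem card_fix_val {n : ℕ} (i m : Fin n) :
    (Finset.univ.filter (fun σ : Equiv.Perm (Fin n) => σ i = m)).card = (n - 1).factorial := by
  have key : ∀ m' : Fin n, (Finset.univ.filter (fun σ : Equiv.Perm (Fin n) => σ i = m')).card =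
      (Finset.univ.filter (fun σ : Equiv.Perm (Fin n) => σ i = m)).card := by
    intro m'
    refine Finset.card_bij' (fun σ _ => Equiv.swap m m' * σ) (fun σ _ => Equiv.swap m m' * σ)
      ?_ ?_ ?_ ?_
    · intro σ hσ; simp at hσ ⊢; simp [hσ]
    · intro σ hσ; simp at hσ ⊢; simp [hσ]
    · intro σ _; simp
    · intro σ _; simp
  have h := Finset.card_eq_sum_card_fiberwise (s := (Finset.univ : Finset (Equiv.Perm (Fin n))))
    (t := Finset.univ) (f := fun σ => σ i) (fun _ _ => Finset.mem_coe.2 (Finset.mem_univ _))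
  rw [Finset.sum_congr rfl (fun m' _ => key m')] at h
  have hn : 0 < n := i.pos
  simp only [Finset.sum_const, smul_eq_mul, Finset.card_univ, Fintype.card_perm,
    Fintype.card_fin] at h
  have h3 := Nat.mul_factorial_pred hn.ne'
  rw [← h3] at h
  exact (Nat.eq_of_mul_eq_mul_left hn h).symm

/-- Whether the maximum may be at position `i` (0-based) for the peak word `w`, size `n`. -/
def okPos (n : ℕ) (w : List Bool) (i : ℕ) : Bool :=
  (i == 0 || i + 1 == n || w.getD (i - 1) true) && (i + 1 == n || !(w.getD i false)) &&
    (decide (i < 2) || !(w.getD (i - 2) false))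

def cN : ℕ → ℕ → List Bool → ℕ
  | 0, n, _ => n.factorial
  | f + 1, n, w => if n < 2 then 1 else
      ((List.range n).map (fun i => bif okPos n w i then
        (n - 1).choose i * (cN f i (w.take (i - 2)) * cN f (n - 1 - i) (w.drop (i + 1))) else 0)).sum

theorem cnt_max_at {n : ℕ} (w : List Bool) (hw : w.length = n - 2) (i : Fin n) (hn : 2 ≤ n) :
    (Finset.univ.filter (fun σ : Equiv.Perm (Fin n) => HW (extF σ) 0 w ∧
      σ i = ⟨n - 1, by omega⟩)).card ≤ if okPos n w i then
        (n - 1).choose i * (cnt i (w.take (i - 2)) * cnt (n - 1 - i) (w.drop (i + 1))) else 0 := by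
  split_ifs with hok
  · have hfE : ∀ s a, (i : ℕ) < s ∨ s + a ≤ i → BlockInv s a (Finset.univ.filter
        (fun σ : Equiv.Perm (Fin n) => σ i = ⟨n - 1, by omega⟩)) := by
      intro s a h σ hσ τ hτ
      simp only [Finset.mem_filter, Finset.mem_univ, true_and, Equiv.Perm.coe_mul,
        Function.comp] at hσ ⊢
      rw [hτ i h, hσ]
    have := card_two_blocks (n := n) (s := 0) (a := i) (s' := i + 1) (a' := n - 1 - i)
      (by omega) (by omega)
      (w.take (i - 2)) (w.drop (i + 1)) (by rw [List.length_take]; omega)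
      (by rw [List.length_drop]; omega) _ (hfE 0 i (by omega)) (hfE (i + 1) (n - 1 - i) (by omega))
    rw [card_fix_val] at this
    have hle : (Finset.univ.filter (fun σ : Equiv.Perm (Fin n) => HW (extF σ) 0 w ∧
      σ i = ⟨n - 1, by omega⟩)).card * ((i : ℕ).factorial * (n - 1 - i).factorial) ≤
        (n - 1).factorial * (cnt i (w.take (i - 2)) * cnt (n - 1 - i) (w.drop (i + 1))) := by
      rw [← this]
      apply Nat.mul_le_mul_right
      apply Finset.card_le_card
      intro σ hσ
      simp only [Finset.mem_filter, Finset.mem_univ, true_and] at hσ ⊢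
      refine ⟨⟨hσ.2, ?_⟩, HW_take hσ.1 _⟩
      have := HW_drop hσ.1 (i + 1)
      simpa using this
    have hc := Nat.choose_mul_factorial_mul_factorial (n := n - 1) (k := i) (by omega)
    rw [← hc] at hle
    have hpos : 0 < (i : ℕ).factorial * (n - 1 - i).factorial :=
      Nat.mul_pos (Nat.factorial_pos _) (Nat.factorial_pos _)
    refine Nat.le_of_mul_le_mul_right (hle.trans (le_of_eq ?_)) hpos
    ring
  · rw [Nat.le_zero, Finset.card_eq_zero, Finset.filter_eq_empty_iff]
    rintro σ - ⟨h, hi⟩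
    apply hok
    have hmax : extF σ i = n - 1 := by
      rw [extF, dif_pos i.2]; simp [hi]
    have hlt : ∀ j, j ≠ (i : ℕ) → j < n → extF σ j < n - 1 := by
      intro j hj hjn
      rw [extF, dif_pos hjn]
      have h1 : (σ ⟨j, hjn⟩ : ℕ) ≠ n - 1 := by
        intro h2
        have : σ ⟨j, hjn⟩ = σ i := by rw [hi]; exact Fin.ext h2
        have := σ.injective this
        apply hj
        rw [← this]
      have := (σ ⟨j, hjn⟩).2
      omega
    have hi2 := i.2
    unfold okPos
    simp only [Bool.and_eq_true, Bool.or_eq_true, beq_iff_eq, decide_eq_true_eq,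
      Bool.not_eq_true']
    refine ⟨⟨?_, ?_⟩, ?_⟩
    · by_cases h0 : (i : ℕ) = 0
      · simp [h0]
      by_cases h1 : (i : ℕ) + 1 = n
      · simp [h1]
      right
      have hj : (i : ℕ) - 1 < w.length := by omega
      rw [List.getD_eq_getElem _ _ hj]
      apply (h _ hj).1
      rw [show 0 + ((i : ℕ) - 1) + 1 = i by omega, hmax]
      exact ⟨hlt _ (by omega) (by omega), hlt _ (by omega) (by omega)⟩
    · by_cases h1 : (i : ℕ) + 1 = n
      · simp [h1]
      right
      by_cases hj : (i : ℕ) < w.length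
      · rw [List.getD_eq_getElem _ _ hj, ← Bool.not_eq_true, ← h _ hj]
        rintro ⟨h3, -⟩
        rw [show 0 + (i : ℕ) = i by omega, hmax] at h3
        have := hlt (i + 1) (by omega) (by omega)
        omega
      · rw [List.getD_eq_default _ _ (by omega)]
    · by_cases h1 : (i : ℕ) < 2
      · simp [h1]
      right
      have hj : (i : ℕ) - 2 < w.length := by omega
      rw [List.getD_eq_getElem _ _ hj, ← Bool.not_eq_true, ← h _ hj]
      rintro ⟨-, h3⟩
      rw [show 0 + ((i : ℕ) - 2) + 2 = i by omega, hmax] at h3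
      have := hlt (0 + ((i : ℕ) - 2) + 1) (by omega) (by omega)
      omega

theorem cnt_le_factorial (n : ℕ) (w : List Bool) : cnt n w ≤ n.factorial := by
  unfold cnt
  refine (Finset.card_le_univ _).trans (le_of_eq ?_)
  rw [Fintype.card_perm, Fintype.card_fin]

theorem cnt_le_cN (f : ℕ) : ∀ (n : ℕ) (w : List Bool), w.length = n - 2 → cnt n w ≤ cN f n w := by
  induction f with
  | zero => intro n w _; exact cnt_le_factorial n w
  | succ f ih =>
    intro n w hw
    rw [cN]
    split_ifs with hn
    · refine (cnt_le_factorial n w).trans ?_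
      interval_cases n <;> simp
    · have hn : 2 ≤ n := by omega
      have h0 : cnt n w = ∑ i : Fin n, (Finset.univ.filter (fun σ : Equiv.Perm (Fin n) =>
          HW (extF σ) 0 w ∧ σ i = ⟨n - 1, by omega⟩)).card := by
        unfold cnt
        rw [Finset.card_eq_sum_card_fiberwise (t := Finset.univ)
          (f := fun σ : Equiv.Perm (Fin n) => σ⁻¹ ⟨n - 1, by omega⟩)
          (fun _ _ => Finset.mem_coe.2 (Finset.mem_univ _))]
        refine Finset.sum_congr rfl fun i _ => ?_
        rw [Finset.filter_filter]
        congr 1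
        ext σ
        simp only [Finset.mem_filter, Finset.mem_univ, true_and]
        rw [Equiv.Perm.inv_eq_iff_eq, eq_comm (a := σ i)]
      have h1 : ∀ g : ℕ → ℕ, ((List.range n).map g).sum = ∑ i : Fin n, g i :=
        fun g => (Finset.sum_range g ▸ rfl)
      rw [h0, h1]
      refine Finset.sum_le_sum fun i _ => (cnt_max_at w hw i hn).trans ?_
      cases okPos n w i with
      | false => simp
      | true =>
        simp only [if_true, cond_true]
        exact Nat.mul_le_mul_left _ (Nat.mul_le_mul
          (ih _ _ (by rw [List.length_take]; omega)) (ih _ _ (by rw [List.length_drop]; omega)))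

/-- Certificates: cut off a block of `a` letters and use bound `k`, look at the next letter, or
observe that the word has two adjacent peaks. -/
inductive Cert where
  | cut (a k : ℕ)
  | node (t0 t1 : Cert)
  | dead

/-- The bounds: words starting with the given prefix have `p(w)^3 * 3^|w| ≤ num/den`. -/
def key : ℕ → List Bool × ℕ × ℕ
  | 1 => ([false, false, false], 12167, 42875)
  | 2 => ([true], 1, 3)
  | 3 => ([false, false, true, false, false, true], 81, 125)
  | 4 => ([false, false, true, false, true], 714984, 1157625)
  | 5 => ([true, false, true, false, true], 238328, 1157625)
  | _ => ([], 1, 1)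

open Cert in
def certOf : ℕ → Cert
  | 1 => (node (node (node (cut 6 0) (cut 5 2)) (node (cut 6 0) dead)) (node (node (node (node (cut 5 1) (node (cut 9 0) dead)) (cut 6 2)) (cut 5 2)) dead))
  | 2 => (node (node (node (node (node (cut 3 1) (node (cut 7 0) dead)) (node (node (node (node (cut 6 1) (node (node (node (cut 9 1) (cut 6 3)) (cut 6 4)) dead)) (cut 7 2)) (cut 6 2)) dead)) (cut 3 2)) (node (node (node (cut 3 1) (cut 5 2)) (node (node (node (cut 5 1) (cut 7 2)) (node (node (cut 9 0) (cut 9 0)) dead)) dead)) dead)) dead)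
  | 3 => (cut 5 2)
  | 4 => (node (node (node (cut 5 1) (cut 7 2)) (node (node (node (cut 7 1) (cut 9 2)) (cut 4 5)) dead)) dead)
  | 5 => (node (node (node (cut 5 1) (cut 7 2)) (node (node (cut 9 0) (cut 9 0)) dead)) dead)
  | _ => (node (node (node (node (cut 1 1) (node (cut 5 0) dead)) (node (node (node (node (cut 4 1) (node (node (cut 9 0) (cut 8 2)) dead)) (cut 5 2)) (cut 4 2)) dead)) (cut 1 2)) (node (node (cut 3 0) (cut 3 0)) dead))

def chk (num den : ℕ) : Cert → List Bool → Bool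
  | .cut a k, u => decide (1 ≤ a) && decide (a ≤ u.length) && (key k).1.isPrefixOf (u.drop a) &&
      decide (cN a a (u.take (a - 2)) ^ 3 * 3 ^ a * (key k).2.1 * den ≤
        num * (key k).2.2 * a.factorial ^ 3)
  | .node t0 t1, u => decide (cN (u.length + 2) (u.length + 2) u ^ 3 * 3 ^ u.length * den ≤
        num * (u.length + 2).factorial ^ 3) &&
      chk num den t0 (u ++ [false]) && chk num den t1 (u ++ [true])
  | .dead, u => decide (2 ≤ u.length) && u.drop (u.length - 2) == [true, true]

theorem chk0 : chk 1 1 (certOf 0) [] = true := by decide +kernel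
theorem chkAll (k : ℕ) : chk (key k).2.1 (key k).2.2 (certOf k) (key k).1 = true := by
  match k with
  | 0 => exact chk0
  | 1 => decide +kernel
  | 2 => decide +kernel
  | 3 => decide +kernel
  | 4 => decide +kernel
  | 5 => decide +kernel
  | (m + 6) => exact chk0

/-- The cubed, normalised bound `p(w)^3 * 3^|w| ≤ num/den`. -/
def Bnd (num den : ℕ) (w : List Bool) : Prop :=
  cnt (w.length + 2) w ^ 3 * 3 ^ w.length * den ≤ num * (w.length + 2).factorial ^ 3

theorem key_den_pos (k : ℕ) : 0 < (key k).2.2 := by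
  unfold key
  split <;> simp

theorem cnt_dead (n : ℕ) (w : List Bool) (k : ℕ) (hk : k + 1 < w.length)
    (h1 : w[k] = true) (h2 : w[k + 1] = true) : cnt n w = 0 := by
  unfold cnt
  rw [Finset.card_eq_zero, Finset.filter_eq_empty_iff]
  intro σ _ h
  have a1 := (h k (by omega)).2 h1
  have a2 := (h (k + 1) hk).2 h2
  rw [show 0 + (k + 1) = 0 + k + 1 by omega, show 0 + k + 1 + 1 = 0 + k + 2 by omega] at a2
  omega

theorem chk_sound (num den : ℕ) (t : Cert) : ∀ (u w : List Bool), chk num den t u = true →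
    u <+: w → (∀ w' : List Bool, w'.length < w.length → ∀ k, (key k).1 <+: w' →
      Bnd (key k).2.1 (key k).2.2 w') → Bnd num den w := by
  induction t with
  | cut a k =>
    intro u w h hu ih
    simp only [chk, Bool.and_eq_true, decide_eq_true_eq, List.isPrefixOf_iff_prefix] at h
    obtain ⟨⟨⟨ha1, ha⟩, hp⟩, hc⟩ := h
    have hlen := hu.length_le
    have haw : a ≤ w.length := by omega
    have hk := ih (w.drop a) (by rw [List.length_drop]; omega) k (hp.trans (hu.drop a))
    have hst := cnt_strip w (w.length + 2) a rfl haw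
    have htake : w.take (a - 2) = u.take (a - 2) := by
      obtain ⟨v, rfl⟩ := hu
      rw [List.take_append_of_le_length (by omega)]
    have hcN := cnt_le_cN a a (u.take (a - 2)) (by rw [List.length_take]; omega)
    rw [htake] at hst
    have hkd := key_den_pos k
    unfold Bnd at hk ⊢
    rw [List.length_drop, show w.length - a + 2 = w.length + 2 - a by omega] at hk
    generalize (key k).2.2 = kd at *
    generalize (key k).2.1 = kn at *
    generalize cnt a (u.take (a - 2)) = ca at *
    generalize cN a a (u.take (a - 2)) = na at *
    generalize cnt (w.length + 2 - a) (w.drop a) = cv at *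
    generalize cnt (w.length + 2) w = cw at *
    have hfa : 0 < a.factorial := Nat.factorial_pos _
    have hfb : 0 < (w.length + 2 - a).factorial := Nat.factorial_pos _
    generalize (w.length + 2 - a).factorial = fb at *
    generalize a.factorial = fa at *
    generalize (w.length + 2).factorial = fn at *
    have hpow : 3 ^ w.length = 3 ^ a * 3 ^ (w.length - a) := by
      rw [← pow_add]; congr 1; omega
    rw [hpow]
    generalize 3 ^ (w.length - a) = pv at *
    generalize 3 ^ a = pa at *
    have hpos : 0 < fa ^ 3 * fb ^ 3 * kd := by positivity
    refine Nat.le_of_mul_le_mul_right ?_ hpos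
    calc cw ^ 3 * (pa * pv) * den * (fa ^ 3 * fb ^ 3 * kd)
        = (cw * (fa * fb)) ^ 3 * (pa * pv * den * kd) := by ring
      _ ≤ (fn * (na * cv)) ^ 3 * (pa * pv * den * kd) := by
          apply Nat.mul_le_mul_right
          apply Nat.pow_le_pow_left
          exact hst.trans (Nat.mul_le_mul_left _ (Nat.mul_le_mul_right _ hcN))
      _ = (cv ^ 3 * pv * kd) * (fn ^ 3 * na ^ 3 * pa * den) := by ring
      _ ≤ (kn * fb ^ 3) * (fn ^ 3 * na ^ 3 * pa * den) := Nat.mul_le_mul_right _ hk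
      _ = (na ^ 3 * pa * kn * den) * (fb ^ 3 * fn ^ 3) := by ring
      _ ≤ (num * kd * fa ^ 3) * (fb ^ 3 * fn ^ 3) := Nat.mul_le_mul_right _ hc
      _ = _ := by ring
  | node t0 t1 ih0 ih1 =>
    intro u w h hu ih
    simp only [chk, Bool.and_eq_true, decide_eq_true_eq] at h
    obtain ⟨⟨hc, h0⟩, h1⟩ := h
    obtain ⟨v, rfl⟩ := hu
    match v with
    | [] =>
      rw [List.append_nil]
      unfold Bnd
      refine le_trans ?_ hc
      have := cnt_le_cN (u.length + 2) (u.length + 2) u (by omega)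
      gcongr
    | false :: v => exact ih0 _ _ h0 ⟨v, by simp⟩ ih
    | true :: v => exact ih1 _ _ h1 ⟨v, by simp⟩ ih
  | dead =>
    intro u w h hu _
    simp only [chk, Bool.and_eq_true, decide_eq_true_eq, beq_iff_eq] at h
    obtain ⟨h2, h3⟩ := h
    obtain ⟨v, rfl⟩ := hu
    have hw : u ++ v = u.take (u.length - 2) ++ ([true, true] ++ v) := by
      rw [← h3, ← List.append_assoc, List.take_append_drop]
    have hl : (u.take (u.length - 2)).length = u.length - 2 := by rw [List.length_take]; omega
    unfold Bnd
    have hz := cnt_dead ((u ++ v).length + 2) (u ++ v) (u.length - 2)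
      (by rw [List.length_append]; omega)
      (by simp only [hw]; rw [List.getElem_append_right (by omega)]; simp [hl])
      (by simp only [hw]; rw [List.getElem_append_right (by omega)]; simp [hl])
    rw [hz]
    simp

theorem all_bounds : ∀ (m : ℕ) (w : List Bool), w.length = m → ∀ k, (key k).1 <+: w →
    Bnd (key k).2.1 (key k).2.2 w := by
  intro m
  induction m using Nat.strong_induction_on with
  | _ m ih =>
    intro w hw k hk
    exact chk_sound _ _ (certOf k) _ w (chkAll k) hk
      (fun w' hw' k' hk' => ih w'.length (by omega) w' rfl k' hk')

theorem cnt_bound (ℓ : ℕ) (w : List Bool) (hw : w.length = 3 * ℓ) :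
    3 ^ ℓ * cnt (3 * ℓ + 2) w ≤ (3 * ℓ + 2).factorial := by
  have h : Bnd 1 1 w := all_bounds _ w rfl 0 (List.nil_prefix)
  unfold Bnd at h
  rw [hw] at h
  have h' : (3 ^ ℓ * cnt (3 * ℓ + 2) w) ^ 3 ≤ (3 * ℓ + 2).factorial ^ 3 := by
    calc _ = cnt (3 * ℓ + 2) w ^ 3 * 3 ^ (3 * ℓ) * 1 := by rw [mul_comm 3 ℓ, pow_mul]; ring
      _ ≤ _ := h
      _ = _ := by ring
  exact (Nat.pow_le_pow_iff_left (by norm_num)).1 h'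

theorem isPeak_iff {n : ℕ} (σ : Equiv.Perm (Fin n)) (j : ℕ) (hj : j + 2 < n) :
    IsPeak σ (j + 2) ↔
      (extF σ j < extF σ (j + 1) ∧ extF σ (j + 2) < extF σ (j + 1)) := by
  unfold IsPeak extF
  simp only [dif_pos hj, dif_pos (show j < n by omega), dif_pos (show j + 1 < n by omega)]
  constructor
  · rintro ⟨_, _, h1, h2⟩
    exact ⟨h1, h2⟩
  · rintro ⟨h1, h2⟩
    exact ⟨by omega, hj, h1, h2⟩

theorem numPeakSet_le (n : ℕ) (S : Finset ℕ) :
    numPeakSet n S ≤ cnt n ((List.range (n - 2)).map (fun j => decide (j + 2 ∈ S))) := by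
  classical
  unfold numPeakSet cnt
  rw [Nat.card_eq_fintype_card, Fintype.card_subtype]
  apply Finset.card_le_card
  intro σ hσ
  simp only [Finset.mem_filter, Finset.mem_univ, true_and] at hσ ⊢
  intro j hj
  simp only [List.length_map, List.length_range] at hj
  simp only [List.getElem_map, List.getElem_range, decide_eq_true_eq, zero_add]
  rw [← isPeak_iff σ j (by omega), ← hσ, peakSet, Finset.mem_filter, Finset.mem_range]
  constructor
  · intro h; exact ⟨by omega, h⟩
  · intro h; exact h.2

theorem cnt_three : cnt 3 [true] = 2 := by decide +kernel

/-- Permutations with peaks at 3, 6, …, 3k. -/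
def goodSet (n k : ℕ) : Finset (Equiv.Perm (Fin n)) :=
  Finset.univ.filter (fun σ => ∀ j < k, HW (extF σ) (3 * j + 1) [true])

theorem goodSet_succ (n k : ℕ) : goodSet n (k + 1) =
    (goodSet n k).filter (fun σ => HW (extF σ) (3 * k + 1) [true]) := by
  ext σ
  simp only [goodSet, Finset.mem_filter, Finset.mem_univ, true_and]
  exact Nat.forall_lt_succ_right

theorem goodSet_inv (n k s a : ℕ) (h : 3 * k + 1 ≤ s) : BlockInv s a (goodSet n k) := by
  induction k with
  | zero =>
    intro σ _ τ _
    simp [goodSet]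
  | succ k ih =>
    rw [goodSet_succ]
    exact (ih (by omega)).filter (a' := 3) _ rfl (Or.inr (by omega))

theorem goodSet_card (n k : ℕ) (h : 3 * k + 1 ≤ n) :
    3 ^ k * (goodSet n k).card = n.factorial := by
  induction k with
  | zero => simp [goodSet, Fintype.card_perm]
  | succ k ih =>
    have h1 := blockM (n := n) (s := 3 * k + 1) (a := 3) (by omega) [true] rfl (goodSet n k)
      (goodSet_inv n k _ _ le_rfl)
    rw [← goodSet_succ, cnt_three] at h1
    have h2 := ih (by omega)
    have h3 : (goodSet n (k + 1)).card * 3 = (goodSet n k).card := by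
      rw [show Nat.factorial 3 = 6 from rfl] at h1
      omega
    rw [← h2, ← h3]
    ring

theorem goodSet_le (ℓ : ℕ) : (goodSet (3 * ℓ + 2) ℓ).card ≤
    numPeakSet (3 * ℓ + 2) ((Finset.range ℓ).image (fun j => 3 * j + 3)) := by
  classical
  unfold numPeakSet
  rw [Nat.card_eq_fintype_card, Fintype.card_subtype]
  apply Finset.card_le_card
  intro σ hσ
  simp only [goodSet, Finset.mem_filter, Finset.mem_univ, true_and] at hσ ⊢
  have hpk : ∀ j < ℓ, extF σ (3 * j + 1) < extF σ (3 * j + 2) ∧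
      extF σ (3 * j + 3) < extF σ (3 * j + 2) := by
    intro j hj
    exact (hσ j hj 0 (by simp)).2 rfl
  ext i
  simp only [peakSet, Finset.mem_filter, Finset.mem_range, Finset.mem_image]
  constructor
  · rintro ⟨hi, hp⟩
    have h2 : 2 ≤ i := hp.1
    obtain ⟨j, rfl⟩ : ∃ j, i = j + 2 := ⟨i - 2, by omega⟩
    rw [isPeak_iff σ j hi] at hp
    have hd : j % 3 = 0 ∨ j % 3 = 1 ∨ j % 3 = 2 := by omega
    rcases hd with hd | hd | hd
    · exfalso
      obtain ⟨q, rfl⟩ : ∃ q, j = 3 * q := ⟨j / 3, by omega⟩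
      have := hpk q (by omega)
      omega
    · exact ⟨j / 3, by omega, by omega⟩
    · exfalso
      obtain ⟨q, rfl⟩ : ∃ q, j = 3 * q + 2 := ⟨j / 3, by omega⟩
      have := hpk q (by omega)
      have e : 3 * q + 2 + 1 = 3 * q + 3 := by omega
      rw [e] at hp
      omega
  · rintro ⟨j, hj, rfl⟩
    refine ⟨by omega, ?_⟩
    exact (isPeak_iff σ (3 * j + 1) (by omega)).2 (hpk j hj)

theorem max_peak_set_count_mod_two (ℓ n : ℕ) (hℓ : 2 ≤ ℓ) (hn : n = 3 * ℓ + 2) :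
    3 ^ ℓ *
      ((Finset.Icc 1 n).powerset.sup fun S => numPeakSet n S) = Nat.factorial n := by
  subst hn
  apply le_antisymm
  · obtain ⟨S, -, hS⟩ := Finset.exists_mem_eq_sup (Finset.Icc 1 (3 * ℓ + 2)).powerset
      ⟨∅, by simp⟩ (fun S => numPeakSet (3 * ℓ + 2) S)
    rw [hS]
    exact (Nat.mul_le_mul_left _ (numPeakSet_le _ S)).trans (cnt_bound ℓ _ (by simp))
  · rw [← goodSet_card (3 * ℓ + 2) ℓ (by omega)]
    apply Nat.mul_le_mul_left
    refine (goodSet_le ℓ).trans ?_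
    apply Finset.le_sup (f := fun S => numPeakSet (3 * ℓ + 2) S)
    rw [Finset.mem_powerset]
    intro i hi
    rw [Finset.mem_image] at hi
    obtain ⟨j, hj, rfl⟩ := hi
    rw [Finset.mem_range] at hj
    rw [Finset.mem_Icc]
    omega
end

section
/- Let c and c' be compositions of the same integer n ≥ 1. Suppose that Int_{a,b}(1+c) ≤ Int_{a,b}(1+c') for all a, b ∈ [n+1], and that Int_{u,v}(1+c) < Int_{u,v}(1+c') for at least one pair (u,v). Then for all nonempty compositions u and w such that u⊕c⊕w is admissible, P(u⊕c⊕w) < P(u⊕c'⊕w); in particular, u⊕c⊕w is not maximal. -/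
/-- `Int_{a,b}(c)` : the number of permutations `σ` of `{1,…,n}` (`n = |c|`) with peak set
`S(c)` such that `σ(1) = a > σ(2)` and `σ(n-1) < σ(n) = b`. -/
noncomputable def IntCount (c : List ℕ) (a b : ℕ) : ℕ :=
  Nat.card {σ : Equiv.Perm (Fin c.sum) // peakSet σ = compPeaks c ∧
    ∃ (h : 2 ≤ c.sum),
      (σ ⟨0, by omega⟩ : ℕ) + 1 = a ∧ σ ⟨1, by omega⟩ < σ ⟨0, by omega⟩ ∧
      σ ⟨c.sum - 2, by omega⟩ < σ ⟨c.sum - 1, by omega⟩ ∧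
      (σ ⟨c.sum - 1, by omega⟩ : ℕ) + 1 = b}

/-- `Ini_{·,b}(c)` : the number of permutations `σ` of `{1,…,n}` (`n = |c|`) with peak set
`S(c)` such that `σ(n-1) < σ(n) = b`. -/
noncomputable def IniCount (c : List ℕ) (b : ℕ) : ℕ :=
  Nat.card {σ : Equiv.Perm (Fin c.sum) // peakSet σ = compPeaks c ∧
    ∃ (h : 1 ≤ c.sum),
      σ ⟨c.sum - 2, by omega⟩ < σ ⟨c.sum - 1, by omega⟩ ∧
      (σ ⟨c.sum - 1, by omega⟩ : ℕ) + 1 = b}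

/-- `1 + c` : the composition obtained from `c` by increasing its first part by 1. -/
def incFirst : List ℕ → List ℕ
  | [] => []
  | x :: t => (x + 1) :: t

/-- Ascent of `σ` at the 0-based position `i`. -/
def Asc {N : ℕ} (σ : Equiv.Perm (Fin N)) (i : ℕ) : Prop :=
  ∃ h : i + 1 < N, σ ⟨i, by omega⟩ < σ ⟨i + 1, h⟩

lemma isPeak_iff_s11 {N : ℕ} (σ : Equiv.Perm (Fin N)) (i : ℕ) :
    IsPeak σ i ↔ 2 ≤ i ∧ i < N ∧ Asc σ (i - 2) ∧ ¬ Asc σ (i - 1) := by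
  unfold IsPeak Asc
  constructor
  · rintro ⟨h2, h3, h4, h5⟩
    obtain ⟨j, rfl⟩ : ∃ j, i = j + 2 := ⟨i - 2, by omega⟩
    refine ⟨h2, h3, ⟨by omega, h4⟩, ?_⟩
    rintro ⟨_, h6⟩
    exact lt_asymm h5 h6
  · rintro ⟨h2, h3, ⟨_, h4⟩, h5⟩
    obtain ⟨j, rfl⟩ : ∃ j, i = j + 2 := ⟨i - 2, by omega⟩
    refine ⟨h2, h3, h4, ?_⟩
    push Not at h5
    refine lt_of_le_of_ne (h5 h3) ?_
    intro h
    have := σ.injective h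
    simp at this

lemma peakSet_eq_iff {N : ℕ} (σ : Equiv.Perm (Fin N)) (S : Finset ℕ) :
    peakSet σ = S ↔ ∀ i, (2 ≤ i ∧ i < N ∧ Asc σ (i - 2) ∧ ¬ Asc σ (i - 1)) ↔ i ∈ S := by
  unfold peakSet
  rw [Finset.ext_iff]
  refine forall_congr' fun i => ?_
  simp only [Finset.mem_filter, Finset.mem_range, isPeak_iff_s11]
  tauto

lemma mem_compPeaks (c : List ℕ) (i : ℕ) :
    i ∈ compPeaks c ↔ ∃ a b : List ℕ, a ≠ [] ∧ b ≠ [] ∧ c = a ++ b ∧ a.sum = i := by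
  unfold compPeaks
  simp only [Finset.mem_image, Finset.mem_range]
  constructor
  · rintro ⟨j, hj, rfl⟩
    refine ⟨c.take (j + 1), c.drop (j + 1), ?_, ?_, (List.take_append_drop _ _).symm, rfl⟩
    · intro h
      have := congrArg List.length h
      simp at this
      subst this
      simp at hj
    · intro h
      have := congrArg List.length h
      simp at this
      omega
  · rintro ⟨a, b, ha, hb, rfl, rfl⟩
    have h1 := List.length_pos_iff.2 ha
    have h2 := List.length_pos_iff.2 hb
    refine ⟨a.length - 1, by simp; omega, ?_⟩
    rw [Nat.sub_add_cancel h1]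
    simp

lemma sum_pos_of_ne (c : List ℕ) (hc : ∀ x ∈ c, 0 < x) (h : c ≠ []) : 0 < c.sum :=
  List.sum_pos _ hc h

lemma compPeaks_bound (c : List ℕ) (hc : ∀ x ∈ c, 0 < x) (i : ℕ) (h : i ∈ compPeaks c) :
    0 < i ∧ i < c.sum := by
  obtain ⟨a, b, ha, hb, rfl, rfl⟩ := (mem_compPeaks c i).1 h
  have h1 := sum_pos_of_ne a (fun x hx => hc x (by simp [hx])) ha
  have h2 := sum_pos_of_ne b (fun x hx => hc x (by simp [hx])) hb
  simp
  omega

lemma mem_compPeaks_append (u v : List ℕ) (hu : u ≠ []) (hv : v ≠ []) (i : ℕ) :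
    i ∈ compPeaks (u ++ v) ↔
      i ∈ compPeaks u ∨ i = u.sum ∨ ∃ j ∈ compPeaks v, i = u.sum + j := by
  simp only [mem_compPeaks]
  constructor
  · rintro ⟨a, b, ha, hb, h, rfl⟩
    rcases List.append_eq_append_iff.1 h with ⟨t, h1, h2⟩ | ⟨t, h1, h2⟩
    · by_cases ht : t = []
      · subst ht; right; left; simp [h1]
      · right; right
        exact ⟨t.sum, ⟨t, b, ht, hb, h2, rfl⟩, by simp [h1]⟩
    · by_cases ht : t = []
      · subst ht; right; left; simp [h1]
      · left
        exact ⟨a, t, ha, ht, h1, rfl⟩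
  · rintro (⟨a, b, ha, hb, rfl, rfl⟩ | rfl | ⟨j, ⟨a, b, ha, hb, rfl, rfl⟩, rfl⟩)
    · exact ⟨a, b ++ v, ha, by simp [hb], by simp, rfl⟩
    · exact ⟨u, v, hu, hv, rfl, rfl⟩
    · exact ⟨u ++ a, b, by simp [hu], hb, by simp, by simp⟩

lemma mem_compPeaks_incFirst (c : List ℕ) (i : ℕ) :
    i ∈ compPeaks (incFirst c) ↔ ∃ j ∈ compPeaks c, i = j + 1 := by
  simp only [mem_compPeaks]
  constructor
  · rintro ⟨a, b, ha, hb, h, rfl⟩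
    cases c with
    | nil => simp [incFirst] at h; exact absurd h.1 ha
    | cons x t =>
      cases a with
      | nil => exact absurd rfl ha
      | cons y s =>
        simp [incFirst] at h
        obtain ⟨h1, h2⟩ := h
        exact ⟨_, ⟨x :: s, b, by simp, hb, by simp [h2], rfl⟩, by simp; omega⟩
  · rintro ⟨j, ⟨a, b, ha, hb, rfl, rfl⟩, rfl⟩
    cases a with
    | nil => exact absurd rfl ha
    | cons y s =>
      exact ⟨(y + 1) :: s, b, by simp, hb, by simp [incFirst], by simp; omega⟩

/-- The interior window condition on patterns. -/
def WinGood (n : ℕ) (c : List ℕ) (τ : Equiv.Perm (Fin (n + 1))) : Prop :=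
  peakSet τ = compPeaks (incFirst c) ∧ ¬ Asc τ 0 ∧ Asc τ (n - 1)

lemma numPeakSet_eq (N : ℕ) (l : List ℕ) (h : l.sum = N) :
    Pcomp l = Nat.card {σ : Equiv.Perm (Fin N) // peakSet σ = compPeaks l} := by
  subst h; rfl

lemma intCount_aux (M n : ℕ) (hn : 1 ≤ n) (S : Finset ℕ) (h : M = n + 1) (a b : ℕ) :
    Nat.card {σ : Equiv.Perm (Fin M) // peakSet σ = S ∧
    ∃ (h : 2 ≤ M),
      (σ ⟨0, by omega⟩ : ℕ) + 1 = a ∧ σ ⟨1, by omega⟩ < σ ⟨0, by omega⟩ ∧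
      σ ⟨M - 2, by omega⟩ < σ ⟨M - 1, by omega⟩ ∧
      (σ ⟨M - 1, by omega⟩ : ℕ) + 1 = b} = Nat.card {τ : Equiv.Perm (Fin (n + 1)) //
      (peakSet τ = S ∧ ¬ Asc τ 0 ∧ Asc τ (n - 1)) ∧
        ((τ 0 : ℕ) + 1, (τ (Fin.last n) : ℕ) + 1) = (a, b)} := by
  subst h
  obtain ⟨k, rfl⟩ : ∃ k, n = k + 1 := ⟨n - 1, by omega⟩
  refine Nat.card_congr (Equiv.subtypeEquivRight fun τ => ?_)
  have e : (τ (⟨0 + 1, by omega⟩ : Fin (k + 1 + 1)) < τ ⟨0, by omega⟩) ↔ ¬ Asc τ 0 := by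
    unfold Asc
    constructor
    · rintro h ⟨_, h'⟩; exact lt_asymm h h'
    · intro h
      push Not at h
      refine lt_of_le_of_ne (h (by omega)) ?_
      intro h
      have := τ.injective h
      simp at this
  have e2 : (τ (⟨k, by omega⟩ : Fin (k + 1 + 1)) < τ ⟨k + 1, by omega⟩) ↔ Asc τ k := by
    unfold Asc
    simp
  rw [Prod.mk.injEq]
  constructor
  · rintro ⟨h1, _, h2, h3, h4, h5⟩
    exact ⟨⟨h1, e.1 h3, e2.1 h4⟩, h2, h5⟩
  · rintro ⟨⟨h1, h2, h3⟩, h4, h5⟩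
    exact ⟨h1, by omega, h4, e.2 h2, e2.2 h3, h5⟩

lemma intCount_eq (n : ℕ) (hn : 1 ≤ n) (c : List ℕ) (h : (incFirst c).sum = n + 1) (a b : ℕ) :
    IntCount (incFirst c) a b = Nat.card {τ : Equiv.Perm (Fin (n + 1)) //
      WinGood n c τ ∧ ((τ 0 : ℕ) + 1, (τ (Fin.last n) : ℕ) + 1) = (a, b)} :=
  intCount_aux _ n hn _ h a b

lemma abstract_inj {α β : Type} [Finite α] (A B : α → Prop) (key : α → β)
    (hle : ∀ k, Nat.card {x // A x ∧ key x = k} ≤ Nat.card {x // B x ∧ key x = k})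
    (hlt : ∃ k, Nat.card {x // A x ∧ key x = k} < Nat.card {x // B x ∧ key x = k}) :
    ∃ f : α → α, (∀ x, A x → B (f x) ∧ key (f x) = key x) ∧
      (∀ x y, A x → A y → f x = f y → x = y) ∧ ∃ y, B y ∧ ∀ x, A x → f x ≠ y := by
  classical
  have := Fintype.ofFinite α
  have he : ∀ k, Nonempty ({x // A x ∧ key x = k} ↪ {x // B x ∧ key x = k}) := by
    intro k
    apply Function.Embedding.nonempty_of_card_le
    simpa only [Nat.card_eq_fintype_card] using hle k
  have e := fun k => (he k).some
  let f : α → α := fun x => if h : A x then (e (key x) ⟨x, h, rfl⟩ : α) else x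
  have hf : ∀ x k (h : A x) (hk : key x = k), f x = e k ⟨x, h, hk⟩ := by
    intro x k h hk
    subst hk
    simp [f, h]
  have hf1 : ∀ x, A x → B (f x) ∧ key (f x) = key x := by
    intro x h
    rw [hf x _ h rfl]
    exact (e (key x) ⟨x, h, rfl⟩).2
  refine ⟨f, hf1, ?_, ?_⟩
  · intro x y hx hy h
    have hk : key x = key y := by rw [← (hf1 x hx).2, h, (hf1 y hy).2]
    rw [hf x _ hx hk, hf y _ hy rfl] at h
    have := (e (key y)).injective (Subtype.ext h)
    exact congrArg Subtype.val this
  · obtain ⟨k, hk⟩ := hlt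
    have hns : ¬ Function.Surjective (e k) := by
      intro hs
      have := Nat.card_le_card_of_surjective _ hs
      omega
    unfold Function.Surjective at hns
    push Not at hns
    obtain ⟨y, hy⟩ := hns
    refine ⟨y, y.2.1, ?_⟩
    intro x hx h
    have hkx : key x = k := by rw [← (hf1 x hx).2, h, y.2.2]
    rw [hf x k hx hkx] at h
    exact hy _ (Subtype.ext h)

lemma exists_std {k : ℕ} {β : Type} [LinearOrder β] (g : Fin k → β) (hg : Function.Injective g) :
    ∃ τ : Equiv.Perm (Fin k), ∀ i j, τ i < τ j ↔ g i < g j := by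
  refine ⟨(Tuple.sort g)⁻¹, fun i j => ?_⟩
  have hm : StrictMono (g ∘ Tuple.sort g) :=
    (Tuple.monotone_sort g).strictMono_of_injective (hg.comp (Tuple.sort g).injective)
  rw [← hm.lt_iff_lt]
  simp

lemma std_unique {k : ℕ} (τ τ' : Equiv.Perm (Fin k)) (h : ∀ i j, τ i < τ j ↔ τ' i < τ' j) :
    τ = τ' := by
  have hm : StrictMono (fun i => τ' (τ⁻¹ i)) := by
    intro i j hij
    apply (h _ _).1
    simpa using hij
  have hid : (fun i => τ' (τ⁻¹ i)) = id := by
    apply (hm.range_inj strictMono_id).1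
    rw [Set.range_id]
    exact Function.Surjective.range_eq (τ'.surjective.comp (τ⁻¹).surjective)
  ext i
  have := congrFun hid (τ i)
  simp at this
  rw [this]

lemma mem_peaks_three (u c w : List ℕ) (hu : u ≠ []) (hc : c ≠ []) (hw : w ≠ [])
    (pu : ∀ x ∈ u, 0 < x) (pc : ∀ x ∈ c, 0 < x) (pw : ∀ x ∈ w, 0 < x) (i : ℕ) :
    i ∈ compPeaks (u ++ c ++ w) ↔
      (u.sum < i ∧ i < u.sum + c.sum ∧ i - u.sum ∈ compPeaks c) ∨
      ((i ≤ u.sum ∨ u.sum + c.sum ≤ i) ∧ (i ∈ compPeaks u ∨ i = u.sum ∨ i = u.sum + c.sum ∨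
        ∃ j ∈ compPeaks w, i = u.sum + c.sum + j)) := by
  rw [mem_compPeaks_append _ _ (by simp [hu]) hw, mem_compPeaks_append _ _ hu hc]
  have bu := compPeaks_bound u pu
  have bc := compPeaks_bound c pc
  have bw := compPeaks_bound w pw
  rw [List.sum_append]
  constructor
  · rintro ((h | h | ⟨j, hj, rfl⟩) | h | ⟨j, hj, rfl⟩)
    · right
      have := bu i h
      exact ⟨by omega, Or.inl h⟩
    · right; exact ⟨by omega, by tauto⟩
    · left
      have := bc j hj
      refine ⟨by omega, by omega, ?_⟩
      rwa [Nat.add_sub_cancel_left]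
    · right; exact ⟨by omega, by tauto⟩
    · right
      exact ⟨by omega, Or.inr (Or.inr (Or.inr ⟨j, hj, rfl⟩))⟩
  · rintro (⟨h1, h2, h3⟩ | ⟨h1, h2 | h2 | h2 | h2⟩)
    · left; right; right
      exact ⟨_, h3, by omega⟩
    all_goals tauto

lemma good_window (N n : ℕ) (u c w : List ℕ) (hu : u ≠ []) (hc : c ≠ []) (hw : w ≠ [])
    (pu : ∀ x ∈ u, 0 < x) (pc : ∀ x ∈ c, 0 < x) (pw : ∀ x ∈ w, 0 < x) (hn : 2 ≤ n)
    (hcs : c.sum = n) (hN : u.sum + n + w.sum = N)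
    (σ : Equiv.Perm (Fin N)) (hσ : peakSet σ = compPeaks (u ++ c ++ w))
    (τ : Equiv.Perm (Fin (n + 1)))
    (hτ : ∀ j < n, Asc τ j ↔ Asc σ (u.sum - 1 + j)) : WinGood n c τ := by
  have hw1 := sum_pos_of_ne w pw hw
  have hu1 := sum_pos_of_ne u pu hu
  rw [peakSet_eq_iff] at hσ
  simp only [mem_peaks_three u c w hu hc hw pu pc pw, hcs] at hσ
  have bc := compPeaks_bound c pc
  refine ⟨?_, ?_, ?_⟩
  · rw [peakSet_eq_iff]
    intro i
    rw [mem_compPeaks_incFirst]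
    constructor
    · rintro ⟨h1, h2, h3, h4⟩
      rw [hτ _ (by omega)] at h3 h4
      refine ⟨i - 1, ?_, by omega⟩
      have h5 := (hσ (u.sum + (i - 1))).1 ⟨by omega, by omega, ?_, ?_⟩
      · rcases h5 with h5 | h5
        · have := h5.2.2
          rwa [Nat.add_sub_cancel_left] at this
        · omega
      · convert h3 using 1; omega
      · convert h4 using 2; omega
    · rintro ⟨j, hj, rfl⟩
      have := bc j hj
      have h5 := (hσ (u.sum + j)).2 (Or.inl ⟨by omega, by omega, by
        rwa [Nat.add_sub_cancel_left]⟩)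
      refine ⟨by omega, by omega, ?_, ?_⟩
      · rw [hτ _ (by omega)]
        convert h5.2.2.1 using 1; omega
      · rw [hτ _ (by omega)]
        convert h5.2.2.2 using 2; omega
  · rw [hτ _ (by omega)]
    have h5 := (hσ u.sum).2 (Or.inr ⟨by omega, by tauto⟩)
    exact h5.2.2.2
  · rw [hτ _ (by omega)]
    have h5 := (hσ (u.sum + n)).2 (Or.inr ⟨by omega, by tauto⟩)
    convert h5.2.2.1 using 1; omega

lemma good_glue (N n : ℕ) (u c c' w : List ℕ) (hu : u ≠ []) (hc : c ≠ []) (hc' : c' ≠ [])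
    (hw : w ≠ [])
    (pu : ∀ x ∈ u, 0 < x) (pc : ∀ x ∈ c, 0 < x) (pc' : ∀ x ∈ c', 0 < x)
    (pw : ∀ x ∈ w, 0 < x) (hn : 2 ≤ n)
    (hcs : c.sum = n) (hcs' : c'.sum = n) (hN : u.sum + n + w.sum = N)
    (σ σ' : Equiv.Perm (Fin N)) (hσ : peakSet σ = compPeaks (u ++ c ++ w))
    (τ : Equiv.Perm (Fin (n + 1))) (hw' : WinGood n c' τ)
    (hτ : ∀ j < n, Asc τ j ↔ Asc σ' (u.sum - 1 + j))
    (ho : ∀ i, i + 1 < u.sum ∨ u.sum + n ≤ i + 1 → (Asc σ i ↔ Asc σ' i)) :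
    peakSet σ' = compPeaks (u ++ c' ++ w) := by
  have hw1 := sum_pos_of_ne w pw hw
  have hu1 := sum_pos_of_ne u pu hu
  rw [peakSet_eq_iff] at hσ ⊢
  simp only [mem_peaks_three u c w hu hc hw pu pc pw, hcs] at hσ
  simp only [mem_peaks_three u c' w hu hc' hw pu pc' pw, hcs']
  have bc := compPeaks_bound c' pc'
  obtain ⟨h1, h2, h3⟩ := hw'
  rw [peakSet_eq_iff] at h1
  have pm := (hσ u.sum).2 (Or.inr ⟨by omega, by tauto⟩)
  have pmn := (hσ (u.sum + n)).2 (Or.inr ⟨by omega, by tauto⟩)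
  have q1 : ¬ Asc σ' (u.sum - 1) := by rwa [hτ _ (by omega)] at h2
  have q2 : Asc σ' (u.sum + n - 2) := by
    rw [hτ _ (by omega)] at h3; convert h3 using 1; omega
  have q3 : Asc σ' (u.sum - 2) := (ho _ (by omega)).1 pm.2.2.1
  have q4 : ¬ Asc σ' (u.sum + n - 1) := by
    rw [← ho _ (by omega)]; exact pmn.2.2.2
  intro i
  by_cases hi : u.sum < i ∧ i < u.sum + n
  · obtain ⟨j, rfl⟩ : ∃ j, i = u.sum + j := ⟨i - u.sum, by omega⟩
    have hj := h1 (j + 1)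
    rw [hτ _ (by omega), hτ _ (by omega), mem_compPeaks_incFirst] at hj
    have e1 : u.sum - 1 + (j + 1 - 2) = u.sum + j - 2 := by omega
    have e2 : u.sum - 1 + (j + 1 - 1) = u.sum + j - 1 := by omega
    rw [e1, e2] at hj
    rw [Nat.add_sub_cancel_left]
    constructor
    · rintro ⟨a1, a2, a3, a4⟩
      left
      obtain ⟨j', h, h'⟩ := hj.1 ⟨by omega, by omega, a3, a4⟩
      obtain rfl : j = j' := by omega
      exact ⟨hi.1, hi.2, h⟩
    · rintro (⟨a1, a2, a3⟩ | ⟨a1, _⟩)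
      · have := hj.2 ⟨j, a3, rfl⟩
        exact ⟨by omega, by omega, this.2.2⟩
      · omega
  · have key : (2 ≤ i ∧ i < N ∧ Asc σ' (i - 2) ∧ ¬ Asc σ' (i - 1)) ↔
        (2 ≤ i ∧ i < N ∧ Asc σ (i - 2) ∧ ¬ Asc σ (i - 1)) := by
      by_cases e : i = u.sum
      · rw [e]
        exact iff_of_true ⟨pm.1, pm.2.1, q3, q1⟩ pm
      by_cases e : i = u.sum + n
      · rw [e]
        exact iff_of_true ⟨pmn.1, pmn.2.1, q2, q4⟩ pmn
      by_cases h0 : 2 ≤ i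
      · rw [ho (i - 2) (by omega), ho (i - 1) (by omega)]
      · exact iff_of_false (fun h => h0 h.1) (fun h => h0 h.1)
    rw [key, hσ]
    exact or_congr_left (iff_of_false (fun h => hi ⟨h.1, h.2.1⟩) (fun h => hi ⟨h.1, h.2.1⟩))

/-- the window embedding of positions -/
def winEmb (m n N : ℕ) (h : m + n < N + 1) (hm : 1 ≤ m) : Fin (n + 1) ↪ Fin N :=
  ⟨fun j => ⟨m - 1 + j, by omega⟩, fun i j h => by
    simp at h; exact Fin.ext (by omega)⟩

lemma asc_of_order {N n m : ℕ} (h : m + n < N + 1) (hm : 1 ≤ m) (σ : Equiv.Perm (Fin N))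
    (τ : Equiv.Perm (Fin (n + 1)))
    (ho : ∀ i j, τ i < τ j ↔ σ (winEmb m n N h hm i) < σ (winEmb m n N h hm j)) :
    ∀ j < n, Asc τ j ↔ Asc σ (m - 1 + j) := by
  intro j hj
  have := ho ⟨j, by omega⟩ ⟨j + 1, by omega⟩
  unfold Asc
  constructor
  · rintro ⟨_, h2⟩
    exact ⟨by omega, this.1 h2⟩
  · rintro ⟨_, h2⟩
    exact ⟨by omega, this.2 h2⟩

theorem comparison_int (n : ℕ) (hn : 1 ≤ n) (c c' : List ℕ)
    (hc : IsComposition n c) (hc' : IsComposition n c')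
    (hle : ∀ a ∈ Finset.Icc 1 (n + 1), ∀ b ∈ Finset.Icc 1 (n + 1),
      IntCount (incFirst c) a b ≤ IntCount (incFirst c') a b)
    (hlt : ∃ u v, IntCount (incFirst c) u v < IntCount (incFirst c') u v) :
    ∀ u w : List ℕ, u ≠ [] → w ≠ [] → (∀ x ∈ u, 0 < x) → (∀ x ∈ w, 0 < x) →
      0 < Pcomp (u ++ c ++ w) →
      Pcomp (u ++ c ++ w) < Pcomp (u ++ c' ++ w) ∧ ¬ IsMaximal (u ++ c ++ w) := by
  intro u w hu hw pu pw hP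
  suffices hmain : Pcomp (u ++ c ++ w) < Pcomp (u ++ c' ++ w) by
    refine ⟨hmain, fun hmax => ?_⟩
    have := hmax (u ++ c' ++ w) ⟨?_, ?_⟩
    · omega
    · intro x hx
      simp only [List.mem_append] at hx
      rcases hx with (hx | hx) | hx
      · exact pu x hx
      · exact hc'.1 x hx
      · exact pw x hx
    · simp [hc.2, hc'.2]
  obtain ⟨pc, sc⟩ := hc
  obtain ⟨pc', sc'⟩ := hc'
  have nc : c ≠ [] := by rintro rfl; simp at sc; omega
  have nc' : c' ≠ [] := by rintro rfl; simp at sc'; omega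
  have ic : (incFirst c).sum = n + 1 := by
    cases c with
    | nil => exact absurd rfl nc
    | cons x t => simp [incFirst] at *; omega
  have ic' : (incFirst c').sum = n + 1 := by
    cases c' with
    | nil => exact absurd rfl nc'
    | cons x t => simp [incFirst] at *; omega
  simp only [intCount_eq n hn c ic, intCount_eq n hn c' ic'] at hle hlt
  obtain ⟨f, hf1, hf2, τ0, hτ0, hτ0'⟩ := abstract_inj (WinGood n c) (WinGood n c')
    (fun τ => ((τ 0 : ℕ) + 1, (τ (Fin.last n) : ℕ) + 1)) (by
      rintro ⟨a, b⟩
      by_cases h : a ∈ Finset.Icc 1 (n + 1) ∧ b ∈ Finset.Icc 1 (n + 1)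
      · exact hle a h.1 b h.2
      · have : IsEmpty {τ : Equiv.Perm (Fin (n + 1)) //
          WinGood n c τ ∧ ((τ 0 : ℕ) + 1, (τ (Fin.last n) : ℕ) + 1) = (a, b)} := by
          constructor
          rintro ⟨τ, _, h2⟩
          rw [Prod.mk.injEq] at h2
          apply h
          simp only [Finset.mem_Icc]
          have := (τ 0).2
          have := (τ (Fin.last n)).2
          omega
        rw [Nat.card_of_isEmpty]
        exact Nat.zero_le _)
    (by obtain ⟨a, b, h⟩ := hlt; exact ⟨(a, b), h⟩)
  have hn2 : 2 ≤ n := by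
    by_contra hh
    obtain rfl : n = 1 := by omega
    exact hτ0.2.1 hτ0.2.2
  set m := u.sum with hm
  set N := m + n + w.sum with hN
  have hsum : (u ++ c ++ w).sum = N := by simp [sc, hN, hm]; omega
  have hsum' : (u ++ c' ++ w).sum = N := by simp [sc', hN, hm]; omega
  rw [numPeakSet_eq N _ hsum] at hP ⊢
  rw [numPeakSet_eq N _ hsum']
  have m1 : 1 ≤ m := sum_pos_of_ne u pu hu
  have k1 : 1 ≤ w.sum := sum_pos_of_ne w pw hw
  have hb : m + n < N + 1 := by omega
  let E := winEmb m n N hb m1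
  have hE : ∀ j, (E j : ℕ) = m - 1 + j := fun j => rfl
  have hstd : ∀ σ : Equiv.Perm (Fin N), ∃ τ : Equiv.Perm (Fin (n + 1)),
      ∀ i j, τ i < τ j ↔ σ (E i) < σ (E j) := fun σ =>
    exists_std (fun i => σ (E i)) (σ.injective.comp E.injective)
  choose std hstd using hstd
  have hwin : ∀ σ : Equiv.Perm (Fin N), peakSet σ = compPeaks (u ++ c ++ w) →
      WinGood n c (std σ) := fun σ hσ =>
    good_window N n u c w hu nc hw pu pc pw hn2 sc rfl σ hσ (std σ)
      (asc_of_order hb m1 σ _ (hstd σ))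
  let ext : Equiv.Perm (Fin (n + 1)) → Equiv.Perm (Fin N) := fun ρ => ρ.viaFintypeEmbedding E
  have hext : ∀ ρ j, ext ρ (E j) = E (ρ j) := fun ρ j =>
    Equiv.Perm.viaFintypeEmbedding_apply_image ρ E j
  have hext' : ∀ ρ x, x ∉ Set.range E → ext ρ x = x := fun ρ x hx =>
    Equiv.Perm.viaFintypeEmbedding_apply_notMem_range ρ E hx
  let F : Equiv.Perm (Fin N) → Equiv.Perm (Fin N) := fun σ =>
    σ * ext ((std σ)⁻¹ * f (std σ))
  have hFstd : ∀ σ i j, f (std σ) i < f (std σ) j ↔ F σ (E i) < F σ (E j) := by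
    intro σ i j
    simp only [F, Equiv.Perm.mul_apply, hext, ← hstd]
    simp
  have hF : ∀ σ, std (F σ) = f (std σ) := fun σ =>
    std_unique _ _ fun i j => by rw [hstd, hFstd]
  have hFgood : ∀ σ : Equiv.Perm (Fin N), peakSet σ = compPeaks (u ++ c ++ w) →
      peakSet (F σ) = compPeaks (u ++ c' ++ w) := by
    intro σ hσ
    have hg := hf1 _ (hwin σ hσ)
    refine good_glue N n u c c' w hu nc nc' hw pu pc pc' pw hn2 sc sc' rfl σ (F σ) hσ
      (f (std σ)) hg.1 (asc_of_order hb m1 _ _ (hFstd σ)) ?_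
    have hk := hg.2
    simp only [Prod.mk.injEq, Nat.add_right_cancel_iff] at hk
    have hfix : ∀ x : Fin N, (x : ℕ) + 1 ≤ m ∨ m + n ≤ (x : ℕ) + 1 → F σ x = σ x := by
      intro x hx
      simp only [F, Equiv.Perm.mul_apply]
      congr 1
      by_cases h0 : (x : ℕ) + 1 = m
      · have : x = E 0 := Fin.ext (by rw [hE]; simp; omega)
        rw [this, hext, Equiv.Perm.mul_apply, Fin.ext hk.1]; simp
      by_cases h1 : (x : ℕ) + 1 = m + n
      · have : x = E (Fin.last n) := Fin.ext (by rw [hE]; simp; omega)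
        rw [this, hext, Equiv.Perm.mul_apply, Fin.ext hk.2]; simp
      apply hext'
      rintro ⟨j, rfl⟩
      rw [hE] at *
      omega
    intro i hi
    unfold Asc
    refine exists_congr fun h => ?_
    rw [hfix _ (by simp; omega), hfix _ (by simp; omega)]
  have hFinj : ∀ σ₁ σ₂, peakSet σ₁ = compPeaks (u ++ c ++ w) →
      peakSet σ₂ = compPeaks (u ++ c ++ w) → F σ₁ = F σ₂ → σ₁ = σ₂ := by
    intro σ₁ σ₂ h1 h2 h
    have hs : std σ₁ = std σ₂ := by
      apply hf2 _ _ (hwin _ h1) (hwin _ h2)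
      rw [← hF, ← hF, h]
    simp only [F, hs] at h
    exact mul_right_cancel h
  -- the extra permutation
  obtain ⟨⟨σ, hσ⟩⟩ : Nonempty {σ : Equiv.Perm (Fin N) // peakSet σ = compPeaks (u ++ c ++ w)} :=
    (Nat.card_pos_iff.1 hP).1
  have hpk := (peakSet_eq_iff _ _).1 hσ
  simp only [mem_peaks_three u c w hu nc hw pu pc pw, sc] at hpk
  have pm := (hpk m).2 (Or.inr ⟨by omega, by tauto⟩)
  have pmn := (hpk (m + n)).2 (Or.inr ⟨by omega, by tauto⟩)
  let g : Fin N → ℕ := fun x =>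
    if h : m ≤ (x : ℕ) + 1 ∧ (x : ℕ) + 1 ≤ m + n then
      N + (τ0 ⟨(x : ℕ) + 1 - m, by omega⟩ : ℕ) else (σ x : ℕ)
  have hg1 : ∀ x : Fin N, ¬ (m ≤ (x : ℕ) + 1 ∧ (x : ℕ) + 1 ≤ m + n) → g x = σ x := by
    intro x hx; simp only [g]; rw [dif_neg hx]
  have hg2 : ∀ j, g (E j) = N + (τ0 j : ℕ) := by
    intro j
    have : m ≤ (E j : ℕ) + 1 ∧ (E j : ℕ) + 1 ≤ m + n := by rw [hE]; omega
    simp only [g]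
    rw [dif_pos this]
    congr 3
    exact Fin.ext (by simp [hE]; omega)
  have hcov : ∀ x : Fin N, (m ≤ (x : ℕ) + 1 ∧ (x : ℕ) + 1 ≤ m + n) → ∃ j, x = E j := by
    intro x hx
    exact ⟨⟨(x : ℕ) + 1 - m, by omega⟩, Fin.ext (by simp [hE]; omega)⟩
  have hginj : Function.Injective g := by
    intro x y hxy
    by_cases hx : m ≤ (x : ℕ) + 1 ∧ (x : ℕ) + 1 ≤ m + n
    · obtain ⟨i, rfl⟩ := hcov x hx
      by_cases hy : m ≤ (y : ℕ) + 1 ∧ (y : ℕ) + 1 ≤ m + n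
      · obtain ⟨j, rfl⟩ := hcov y hy
        rw [hg2, hg2] at hxy
        rw [τ0.injective (Fin.ext (Nat.add_left_cancel hxy))]
      · rw [hg2, hg1 y hy] at hxy
        have := (σ y).2
        omega
    · by_cases hy : m ≤ (y : ℕ) + 1 ∧ (y : ℕ) + 1 ≤ m + n
      · obtain ⟨j, rfl⟩ := hcov y hy
        rw [hg2, hg1 x hx] at hxy
        have := (σ x).2
        omega
      · rw [hg1 x hx, hg1 y hy] at hxy
        exact σ.injective (Fin.ext hxy)
  obtain ⟨σ', hσ'⟩ := exists_std g hginj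
  have hord : ∀ i j, τ0 i < τ0 j ↔ σ' (E i) < σ' (E j) := by
    intro i j
    rw [hσ', hg2, hg2, Fin.lt_def]
    omega
  have hσ'good : peakSet σ' = compPeaks (u ++ c' ++ w) := by
    refine good_glue N n u c c' w hu nc nc' hw pu pc pc' pw hn2 sc sc' rfl σ σ' hσ
      τ0 hτ0 (asc_of_order hb m1 _ _ hord) ?_
    intro i hi
    by_cases e : i = m - 2
    · subst e
      refine iff_of_true pm.2.2.1 ⟨by omega, ?_⟩
      have e0 : (⟨m - 2 + 1, by omega⟩ : Fin N) = E 0 := Fin.ext (by rw [hE]; simp; omega)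
      rw [hσ', e0, hg2, hg1 _ (by simp; omega)]
      have := (σ ⟨m - 2, by omega⟩).2
      omega
    by_cases e' : i = m + n - 1
    · subst e'
      refine iff_of_false pmn.2.2.2 ?_
      rintro ⟨h, h'⟩
      have e0 : (⟨m + n - 1, by omega⟩ : Fin N) = E (Fin.last n) :=
        Fin.ext (by rw [hE]; simp; omega)
      rw [hσ', e0, hg2, hg1 _ (by simp; omega)] at h'
      have := (σ ⟨m + n - 1 + 1, h⟩).2
      omega
    unfold Asc
    refine exists_congr fun h => ?_
    rw [hσ', hg1 _ (by simp; omega), hg1 _ (by simp; omega)]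
    rfl
  have hσ'std : std σ' = τ0 := std_unique _ _ fun i j => by rw [hstd, hord]
  classical
  simp only [Nat.card_eq_fintype_card]
  refine Fintype.card_lt_of_injective_of_notMem
    (fun x : {σ : Equiv.Perm (Fin N) // peakSet σ = compPeaks (u ++ c ++ w)} =>
      (⟨F x.1, hFgood x.1 x.2⟩ :
        {σ : Equiv.Perm (Fin N) // peakSet σ = compPeaks (u ++ c' ++ w)}))
    ?_ (b := ⟨σ', hσ'good⟩) ?_
  · intro x y hxy
    exact Subtype.ext (hFinj _ _ x.2 y.2 (congrArg Subtype.val hxy))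
  · rintro ⟨x, hx⟩
    have hx' : F x.1 = σ' := congrArg Subtype.val hx
    apply hτ0' _ (hwin _ x.2)
    rw [← hF, hx', hσ'std]
end

section
/- Let c = (c_1,…,c_k) be a composition of n. If k = 1 and n ≥ 5, then c is not maximal. If k ≥ 2 and there exists an index i with 1 ≤ i ≤ k−1 such that c_i ≥ 5, or if k ≥ 2 and c_k ≥ 4, then c is not maximal. -/
/-- 1-based value function of a permutation of `Fin n`, extended by `0`. -/
def pv {n : ℕ} (σ : Equiv.Perm (Fin n)) (p : ℕ) : ℕ :=
  if h : 1 ≤ p ∧ p ≤ n then (σ ⟨p - 1, by omega⟩ : ℕ) else 0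

lemma pv_eq {n : ℕ} (σ : Equiv.Perm (Fin n)) (p : ℕ) (h1 : 1 ≤ p) (h2 : p ≤ n) :
    pv σ p = (σ ⟨p - 1, by omega⟩ : ℕ) := by
  unfold pv
  rw [dif_pos ⟨h1, h2⟩]

lemma pv_lt {n : ℕ} (σ : Equiv.Perm (Fin n)) (p : ℕ) (h : 1 ≤ n) : pv σ p < n := by
  unfold pv
  split_ifs
  · exact (σ _).2
  · omega

lemma pv_ne {n : ℕ} (σ : Equiv.Perm (Fin n)) (p q : ℕ) (h1 : 1 ≤ p) (h2 : p ≤ n)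
    (h3 : 1 ≤ q) (h4 : q ≤ n) (h : p ≠ q) : pv σ p ≠ pv σ q := by
  rw [pv_eq σ p h1 h2, pv_eq σ q h3 h4]
  intro h'
  have := σ.injective (Fin.ext h')
  simp only [Fin.mk.injEq] at this
  omega

/-- Peaks expressed with the value function. -/
def HasPeaks (n : ℕ) (v : ℕ → ℕ) (S : Finset ℕ) : Prop :=
  ∀ i, i ∈ S ↔ (2 ≤ i ∧ i < n ∧ v (i - 1) < v i ∧ v (i + 1) < v i)

lemma peakSet_iff {n : ℕ} (σ : Equiv.Perm (Fin n)) (S : Finset ℕ) :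
    peakSet σ = S ↔ HasPeaks n (pv σ) S := by
  have key : ∀ i, i ∈ peakSet σ ↔
      (2 ≤ i ∧ i < n ∧ pv σ (i - 1) < pv σ i ∧ pv σ (i + 1) < pv σ i) := by
    intro i
    classical
    unfold peakSet
    refine Iff.trans Finset.mem_filter ?_
    rw [Finset.mem_range]
    unfold IsPeak
    constructor
    · rintro ⟨_, h2, h3, h4, h5⟩
      refine ⟨h2, h3, ?_, ?_⟩
      · rw [pv_eq σ (i - 1) (by omega) (by omega), pv_eq σ i (by omega) (by omega)]
        exact h4
      · rw [pv_eq σ (i + 1) (by omega) (by omega), pv_eq σ i (by omega) (by omega)]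
        exact h5
    · rintro ⟨h2, h3, h4, h5⟩
      rw [pv_eq σ (i - 1) (by omega) (by omega), pv_eq σ i (by omega) (by omega)] at h4
      rw [pv_eq σ (i + 1) (by omega) (by omega), pv_eq σ i (by omega) (by omega)] at h5
      exact ⟨h3, h2, h3, h4, h5⟩
  constructor
  · rintro rfl
    exact key
  · intro h
    ext i
    rw [key i, h i]

lemma pv_swap {n : ℕ} (σ : Equiv.Perm (Fin n)) (a b : Fin n) (p : ℕ) :
    pv (σ * Equiv.swap a b) p =
      if p = a + 1 then pv σ (b + 1) else if p = b + 1 then pv σ (a + 1) else pv σ p := by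
  have ha := a.2
  have hb := b.2
  by_cases hp : 1 ≤ p ∧ p ≤ n
  · rw [pv_eq _ p hp.1 hp.2, pv_eq _ _ (by omega) (by omega), pv_eq _ _ (by omega) (by omega),
      pv_eq _ p hp.1 hp.2]
    simp only [Equiv.Perm.mul_apply, Equiv.swap_apply_def, Fin.ext_iff, Nat.add_sub_cancel]
    by_cases h1 : p = a + 1
    · subst h1
      simp
    · by_cases h2 : p = b + 1
      · subst h2
        have : ¬ ((b : ℕ) = a) := by omega
        simp [this]
      · have e1 : ¬ (p - 1 = (a : ℕ)) := by omega
        have e2 : ¬ (p - 1 = (b : ℕ)) := by omega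
        simp [e1, e2, h1, h2]
  · have e1 : ¬ (p = (a : ℕ) + 1) := by omega
    have e2 : ¬ (p = (b : ℕ) + 1) := by omega
    simp only [if_neg e1, if_neg e2]
    unfold pv
    rw [dif_neg hp, dif_neg hp]

/-- Standardization. -/
lemma exists_perm {n : ℕ} (f : Fin n → ℕ) (hf : Function.Injective f) :
    ∃ τ : Equiv.Perm (Fin n), ∀ i j, τ i < τ j ↔ f i < f j := by
  have hc : (Finset.univ.image f).card = n := by
    rw [Finset.card_image_of_injective _ hf]; simp
  let e := (Finset.univ.image f).orderIsoOfFin hc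
  let g : Fin n → Fin n := fun i => e.symm ⟨f i, by simp⟩
  have hg : ∀ i j, g i < g j ↔ f i < f j := by
    intro i j
    simp [g]
  have hinj : Function.Injective g := by
    intro i j h
    apply hf
    simpa [g] using h
  refine ⟨Equiv.ofBijective g (Finite.injective_iff_bijective.mp hinj), ?_⟩
  intro i j
  simpa using hg i j

lemma exists_pv {n : ℕ} (w : ℕ → ℕ)
    (hw : ∀ p q, 1 ≤ p → p ≤ n → 1 ≤ q → q ≤ n → w p = w q → p = q) :
    ∃ τ : Equiv.Perm (Fin n), ∀ p q, 1 ≤ p → p ≤ n → 1 ≤ q → q ≤ n →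
      (pv τ p < pv τ q ↔ w p < w q) := by
  obtain ⟨τ, hτ⟩ := exists_perm (fun i : Fin n => w (i + 1)) (by
    intro i j h
    have := hw _ _ (by omega) (by omega) (by omega) (by omega) h
    ext; omega)
  refine ⟨τ, ?_⟩
  intro p q h1 h2 h3 h4
  rw [pv_eq _ _ h1 h2, pv_eq _ _ h3 h4]
  have := hτ ⟨p - 1, by omega⟩ ⟨q - 1, by omega⟩
  simp only [Nat.sub_add_cancel h1, Nat.sub_add_cancel h3] at this
  exact this

section Main

variable {n a : ℕ} {S : Finset ℕ}

/-- The hypotheses on the gap after position `a`. -/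
structure Gap (n a : ℕ) (S : Finset ℕ) : Prop where
  left : a = 0 ∨ a ∈ S
  g1 : a + 1 ∉ S
  g2 : a + 2 ∉ S
  g3 : a + 3 ∉ S
  g4 : a + 4 ∉ S
  len : a + 4 ≤ n
  big : 5 ≤ n

/-- The order facts known about a permutation with peak set `S` at a gap. -/
lemma gap_facts (G : Gap n a S) (v : ℕ → ℕ)
    (hv : ∀ p q, 1 ≤ p → p ≤ n → 1 ≤ q → q ≤ n → p ≠ q → v p ≠ v q)
    (h : HasPeaks n v S) :
    (a = 0 ∨ (2 ≤ a ∧ v (a - 1) < v a ∧ v (a + 1) < v a)) ∧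
    (v (a + 1) < v (a + 2) → v (a + 2) < v (a + 3)) ∧
    (v (a + 2) < v (a + 3) → v (a + 3) < v (a + 4)) ∧
    (v (a + 3) < v (a + 4) → a + 5 ≤ n → v (a + 4) < v (a + 5)) := by
  have hl := G.len
  refine ⟨?_, ?_, ?_, ?_⟩
  · rcases G.left with h0 | h0
    · exact Or.inl h0
    · have := (h a).1 h0
      exact Or.inr ⟨this.1, this.2.2.1, this.2.2.2⟩
  · intro h1
    have := mt (h (a + 2)).2 G.g2
    have := hv (a + 2) (a + 3) (by omega) (by omega) (by omega) (by omega) (by omega)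
    simp only [show a + 2 - 1 = a + 1 by omega, show a + 2 + 1 = a + 3 by omega] at *
    omega
  · intro h1
    have := mt (h (a + 3)).2 G.g3
    have := hv (a + 3) (a + 4) (by omega) (by omega) (by omega) (by omega) (by omega)
    simp only [show a + 3 - 1 = a + 2 by omega, show a + 3 + 1 = a + 4 by omega] at *
    omega
  · intro h1 h2
    have := mt (h (a + 4)).2 G.g4
    have := hv (a + 4) (a + 5) (by omega) (by omega) (by omega) (by omega) (by omega)
    simp only [show a + 4 - 1 = a + 3 by omega, show a + 4 + 1 = a + 5 by omega] at *
    omega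

/-- Splitting the peak condition by position. -/
lemma hasPeaks_of (G : Gap n a S) (v w : ℕ → ℕ) (h : HasPeaks n v S)
    (hlow : ∀ i, 2 ≤ i → i + 1 ≤ a → i < n →
      ((w (i - 1) < w i ∧ w (i + 1) < w i) ↔ (v (i - 1) < v i ∧ v (i + 1) < v i)))
    (h0 : 2 ≤ a → w (a - 1) < w a ∧ w (a + 1) < w a)
    (h2 : w (a + 1) < w (a + 2) ∧ w (a + 3) < w (a + 2))
    (h4 : a + 4 < n → ¬ (w (a + 3) < w (a + 4) ∧ w (a + 5) < w (a + 4)))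
    (h5 : a + 5 < n → ((w (a + 4) < w (a + 5) ∧ w (a + 6) < w (a + 5)) ↔
      (v (a + 4) < v (a + 5) ∧ v (a + 6) < v (a + 5))))
    (hhigh : ∀ i, a + 6 ≤ i → i < n →
      ((w (i - 1) < w i ∧ w (i + 1) < w i) ↔ (v (i - 1) < v i ∧ v (i + 1) < v i))) :
    HasPeaks n w (insert (a + 2) S) := by
  have hl := G.len
  intro i
  rw [Finset.mem_insert]
  by_cases hi2 : 2 ≤ i ∧ i < n
  swap
  · have := h i
    constructor
    · rintro (h' | h')
      · omega
      · have := this.1 h'; omega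
    · rintro ⟨_, _, _⟩; omega
  have hS : i ∈ S ↔ (v (i - 1) < v i ∧ v (i + 1) < v i) := by
    rw [h i]; tauto
  have hgoal : (2 ≤ i ∧ i < n ∧ w (i - 1) < w i ∧ w (i + 1) < w i) ↔
      (w (i - 1) < w i ∧ w (i + 1) < w i) := by tauto
  rw [hgoal]
  by_cases c1 : i + 1 ≤ a
  · rw [hlow i hi2.1 c1 hi2.2, hS]
    constructor
    · rintro (h' | h')
      · omega
      · exact h'
    · exact Or.inr
  by_cases c2 : a + 6 ≤ i
  · rw [hhigh i c2 hi2.2, hS]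
    constructor
    · rintro (h' | h')
      · omega
      · exact h'
    · exact Or.inr
  have : i = a ∨ i = a + 1 ∨ i = a + 2 ∨ i = a + 3 ∨ i = a + 4 ∨ i = a + 5 := by omega
  rcases this with rfl | rfl | rfl | rfl | rfl | rfl
  · have hL := G.left
    constructor
    · intro _; exact h0 hi2.1
    · intro _
      rcases hL with hL | hL
      · omega
      · exact Or.inr hL
  · constructor
    · rintro (h' | h')
      · omega
      · exact absurd h' G.g1
    · rintro ⟨_, h'⟩
      have := h2.1
      simp only [show a + 1 + 1 = a + 2 by omega] at h'
      omega
  · constructor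
    · intro _; exact h2
    · intro _; exact Or.inl rfl
  · constructor
    · rintro (h' | h')
      · omega
      · exact absurd h' G.g3
    · rintro ⟨h', _⟩
      have := h2.2
      simp only [show a + 3 - 1 = a + 2 by omega] at h'
      omega
  · constructor
    · rintro (h' | h')
      · omega
      · exact absurd h' G.g4
    · intro h'
      exact absurd h' (h4 hi2.2)
  · refine Iff.trans ?_ (h5 hi2.2).symm
    rw [hS]
    constructor
    · rintro (h' | h')
      · omega
      · exact h'
    · exact Or.inr

/-- The injection: a local rearrangement. -/
def phi (n a : ℕ) (hl : a + 4 ≤ n) (σ : Equiv.Perm (Fin n)) : Equiv.Perm (Fin n) :=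
  if pv σ (a + 3) < pv σ (a + 1) then
    σ * Equiv.swap ⟨a, by omega⟩ ⟨a + 1, by omega⟩
  else σ * Equiv.swap ⟨a + 1, by omega⟩ ⟨a + 3, by omega⟩

lemma pv_C (hl : a + 4 ≤ n) (σ : Equiv.Perm (Fin n)) (p : ℕ) :
    pv (σ * Equiv.swap (⟨a, by omega⟩ : Fin n) ⟨a + 1, by omega⟩) p =
      if p = a + 1 then pv σ (a + 2) else if p = a + 2 then pv σ (a + 1) else pv σ p := by
  rw [pv_swap]

lemma pv_D (hl : a + 4 ≤ n) (σ : Equiv.Perm (Fin n)) (p : ℕ) :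
    pv (σ * Equiv.swap (⟨a + 1, by omega⟩ : Fin n) ⟨a + 3, by omega⟩) p =
      if p = a + 2 then pv σ (a + 4) else if p = a + 4 then pv σ (a + 2) else pv σ p := by
  rw [pv_swap]

lemma phi_peaks (G : Gap n a S) (σ : Equiv.Perm (Fin n)) (h : HasPeaks n (pv σ) S) :
    HasPeaks n (pv (phi n a G.len σ)) (insert (a + 2) S) := by
  have hl := G.len
  have hne := pv_ne σ
  have n12 := hne (a + 1) (a + 2) (by omega) (by omega) (by omega) (by omega) (by omega)
  have n13 := hne (a + 1) (a + 3) (by omega) (by omega) (by omega) (by omega) (by omega)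
  have n23 := hne (a + 2) (a + 3) (by omega) (by omega) (by omega) (by omega) (by omega)
  obtain ⟨f0, f2, f3, f4⟩ := gap_facts G (pv σ) hne h
  unfold phi
  split_ifs with hc
  · have e := pv_C hl σ
    set w := pv (σ * Equiv.swap (⟨a, by omega⟩ : Fin n) ⟨a + 1, by omega⟩) with hw
    have e1 : w (a + 1) = pv σ (a + 2) := by rw [e]; simp
    have e2 : w (a + 2) = pv σ (a + 1) := by rw [e]; simp
    have ee : ∀ i, i ≠ a + 1 → i ≠ a + 2 → w i = pv σ i := by
      intro i h1 h2; rw [e, if_neg h1, if_neg h2]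
    have e3 := ee (a + 3) (by omega) (by omega)
    have e4 := ee (a + 4) (by omega) (by omega)
    have e5 := ee (a + 5) (by omega) (by omega)
    have e6 := ee (a + 6) (by omega) (by omega)
    apply hasPeaks_of G (pv σ) w h
    · intro i hi1 hi2 hi3
      rw [ee (i - 1) (by omega) (by omega), ee i (by omega) (by omega),
        ee (i + 1) (by omega) (by omega)]
    · intro ha
      rw [ee (a - 1) (by omega) (by omega), ee a (by omega) (by omega), e1]
      omega
    · rw [e1, e2, e3]; omega
    · rw [e3, e4, e5]; omega
    · rw [e4, e5, e6]; tauto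
    · intro i hi1 hi2
      rw [ee (i - 1) (by omega) (by omega), ee i (by omega) (by omega),
        ee (i + 1) (by omega) (by omega)]
  · have e := pv_D hl σ
    set w := pv (σ * Equiv.swap (⟨a + 1, by omega⟩ : Fin n) ⟨a + 3, by omega⟩) with hw
    have e2 : w (a + 2) = pv σ (a + 4) := by rw [e]; simp
    have e4 : w (a + 4) = pv σ (a + 2) := by rw [e]; simp
    have ee : ∀ i, i ≠ a + 2 → i ≠ a + 4 → w i = pv σ i := by
      intro i h1 h2; rw [e, if_neg h1, if_neg h2]
    have e1 := ee (a + 1) (by omega) (by omega)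
    have e3 := ee (a + 3) (by omega) (by omega)
    have e5 := ee (a + 5) (by omega) (by omega)
    have e6 := ee (a + 6) (by omega) (by omega)
    apply hasPeaks_of G (pv σ) w h
    · intro i hi1 hi2 hi3
      rw [ee (i - 1) (by omega) (by omega), ee i (by omega) (by omega),
        ee (i + 1) (by omega) (by omega)]
    · intro ha
      rw [ee (a - 1) (by omega) (by omega), ee a (by omega) (by omega), e1]
      omega
    · rw [e1, e2, e3]; omega
    · rw [e3, e4, e5]; omega
    · intro h5
      rw [e4, e5, e6]; omega
    · intro i hi1 hi2
      rw [ee (i - 1) (by omega) (by omega), ee i (by omega) (by omega),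
        ee (i + 1) (by omega) (by omega)]

lemma phi_ne (G : Gap n a S) (σ τ : Equiv.Perm (Fin n)) (hσ : HasPeaks n (pv σ) S)
    (hτ : HasPeaks n (pv τ) S) (cσ : pv σ (a + 3) < pv σ (a + 1))
    (cτ : ¬ pv τ (a + 3) < pv τ (a + 1)) : phi n a G.len σ ≠ phi n a G.len τ := by
  have hl := G.len
  intro he
  unfold phi at he
  rw [if_pos cσ, if_neg cτ] at he
  have key : ∀ p, _ := fun p => (pv_C hl σ p).symm.trans ((congrArg (fun x => pv x p) he).trans
    (pv_D hl τ p))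
  have k1 := key (a + 1)
  have k2 := key (a + 2)
  have k3 := key (a + 3)
  have k4 := key (a + 4)
  simp at k1 k2 k3 k4
  obtain ⟨_, f2, f3, f4⟩ := gap_facts G (pv σ) (pv_ne σ) hσ
  obtain ⟨_, g2, g3, g4⟩ := gap_facts G (pv τ) (pv_ne τ) hτ
  have n13 := pv_ne τ (a + 1) (a + 3) (by omega) (by omega) (by omega) (by omega) (by omega)
  have n12 := pv_ne τ (a + 1) (a + 2) (by omega) (by omega) (by omega) (by omega) (by omega)
  have n23 := pv_ne τ (a + 2) (a + 3) (by omega) (by omega) (by omega) (by omega) (by omega)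
  omega

lemma phi_inj (G : Gap n a S) (σ τ : Equiv.Perm (Fin n)) (hσ : HasPeaks n (pv σ) S)
    (hτ : HasPeaks n (pv τ) S) (he : phi n a G.len σ = phi n a G.len τ) : σ = τ := by
  by_cases cσ : pv σ (a + 3) < pv σ (a + 1) <;> by_cases cτ : pv τ (a + 3) < pv τ (a + 1)
  · unfold phi at he
    rw [if_pos cσ, if_pos cτ] at he
    exact mul_right_cancel he
  · exact absurd he (phi_ne G σ τ hσ hτ cσ cτ)
  · exact absurd he.symm (phi_ne G τ σ hτ hσ cτ cσ)
  · unfold phi at he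
    rw [if_neg cσ, if_neg cτ] at he
    exact mul_right_cancel he

/-- Raise position `q` to the second largest value and `a+2` to the largest. -/
lemma raise (G : Gap n a S) (σ : Equiv.Perm (Fin n)) (h : HasPeaks n (pv σ) S) (q : ℕ)
    (hq : q = a + 3 ∨ (q = a + 4 ∧ n = a + 4)) :
    ∃ τ : Equiv.Perm (Fin n), HasPeaks n (pv τ) (insert (a + 2) S) ∧
      (∀ p, 1 ≤ p → p ≤ n → p ≠ a + 2 → pv τ p < pv τ (a + 2)) ∧
      (∀ p, 1 ≤ p → p ≤ n → p ≠ a + 2 → p ≠ q → pv τ p < pv τ q) := by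
  have hl := G.len
  have hlt : ∀ p, pv σ p < n := fun p => pv_lt σ p (by omega)
  obtain ⟨w, hw⟩ : ∃ w : ℕ → ℕ, ∀ p, w p = if p = a + 2 then n + 1 else if p = q then n
    else pv σ p := ⟨_, fun p => rfl⟩
  have w2 : w (a + 2) = n + 1 := by rw [hw, if_pos rfl]
  have wq : w q = n := by rw [hw, if_neg (by omega), if_pos rfl]
  have we : ∀ p, p ≠ a + 2 → p ≠ q → w p = pv σ p := by
    intro p h1 h2; rw [hw, if_neg h1, if_neg h2]
  obtain ⟨τ, hτ⟩ := exists_pv (n := n) w (by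
    intro p r h1 h2 h3 h4 he
    by_contra hpr
    have := pv_ne σ p r h1 h2 h3 h4 hpr
    have := hlt p
    have := hlt r
    rw [hw p, hw r] at he
    split_ifs at he <;> omega)
  obtain ⟨f0, f2, f3, f4⟩ := gap_facts G (pv σ) (pv_ne σ) h
  have hτe : ∀ p r, 1 ≤ p → p ≤ n → 1 ≤ r → r ≤ n → p ≠ a + 2 → p ≠ q → r ≠ a + 2 → r ≠ q →
      (pv τ p < pv τ r ↔ pv σ p < pv σ r) := by
    intro p r h1 h2 h3 h4 h5 h6 h7 h8
    rw [hτ p r h1 h2 h3 h4, we p h5 h6, we r h7 h8]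
  have top2 : ∀ p, 1 ≤ p → p ≤ n → p ≠ a + 2 → pv τ p < pv τ (a + 2) := by
    intro p h1 h2 h3
    rw [hτ p (a + 2) h1 h2 (by omega) (by omega), w2, hw, if_neg h3]
    have := hlt p
    split_ifs <;> omega
  have topq : ∀ p, 1 ≤ p → p ≤ n → p ≠ a + 2 → p ≠ q → pv τ p < pv τ q := by
    intro p h1 h2 h3 h4
    rw [hτ p q h1 h2 (by omega) (by omega), wq, we p h3 h4]
    exact hlt p
  refine ⟨τ, ?_, top2, topq⟩
  apply hasPeaks_of G (pv σ) (pv τ) h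
  · intro i h1 h2 h3
    rw [hτe _ _ (by omega) (by omega) (by omega) (by omega) (by omega) (by omega) (by omega)
      (by omega), hτe _ _ (by omega) (by omega) (by omega) (by omega) (by omega) (by omega)
      (by omega) (by omega)]
  · intro ha
    rw [hτe _ _ (by omega) (by omega) (by omega) (by omega) (by omega) (by omega) (by omega)
      (by omega), hτe _ _ (by omega) (by omega) (by omega) (by omega) (by omega) (by omega)
      (by omega) (by omega)]
    omega
  · exact ⟨top2 _ (by omega) (by omega) (by omega), top2 _ (by omega) (by omega) (by omega)⟩
  · intro h4
    have hq3 : q = a + 3 := by omega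
    have := topq (a + 4) (by omega) (by omega) (by omega) (by omega)
    rw [hq3] at this
    omega
  · intro h5
    rw [hτe _ _ (by omega) (by omega) (by omega) (by omega) (by omega) (by omega) (by omega)
      (by omega), hτe _ _ (by omega) (by omega) (by omega) (by omega) (by omega) (by omega)
      (by omega) (by omega)]
  · intro i h1 h2
    rw [hτe _ _ (by omega) (by omega) (by omega) (by omega) (by omega) (by omega) (by omega)
      (by omega), hτe _ _ (by omega) (by omega) (by omega) (by omega) (by omega) (by omega)
      (by omega) (by omega)]

lemma exists_not_image (G : Gap n a S) (σ : Equiv.Perm (Fin n)) (h : HasPeaks n (pv σ) S) :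
    ∃ τ : Equiv.Perm (Fin n), HasPeaks n (pv τ) (insert (a + 2) S) ∧
      ∀ ρ : Equiv.Perm (Fin n), HasPeaks n (pv ρ) S → phi n a G.len ρ ≠ τ := by
  have hl := G.len
  have hb := G.big
  have hk : ∃ q, (q = a + 3 ∧ a + 5 ≤ n) ∨ (q = a + 4 ∧ n = a + 4) := by
    by_cases hn : a + 5 ≤ n
    · exact ⟨_, Or.inl ⟨rfl, hn⟩⟩
    · exact ⟨_, Or.inr ⟨rfl, by omega⟩⟩
  obtain ⟨q, hq⟩ := hk
  obtain ⟨τ, hτ, top2, topq⟩ := raise G σ h q (by omega)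
  refine ⟨τ, hτ, ?_⟩
  rintro ρ hρ rfl
  obtain ⟨f0, f2, f3, f4⟩ := gap_facts G (pv ρ) (pv_ne ρ) hρ
  unfold phi at top2 topq
  split_ifs at top2 topq with hc
  · simp only [pv_C hl] at top2 topq
    rcases hq with ⟨rfl, hn⟩ | ⟨rfl, hn⟩
    · have t1 := topq (a + 1) (by omega) (by omega) (by omega) (by omega)
      have t4 := topq (a + 4) (by omega) (by omega) (by omega) (by omega)
      simp at t1 t4
      omega
    · have t := top2 a (by omega) (by omega) (by omega)
      simp at t
      omega
  · simp only [pv_D hl] at top2 topq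
    rcases hq with ⟨rfl, hn⟩ | ⟨rfl, hn⟩
    · have t1 := topq (a + 1) (by omega) (by omega) (by omega) (by omega)
      have t4 := topq (a + 4) (by omega) (by omega) (by omega) (by omega)
      have t5 := top2 (a + 5) (by omega) (by omega) (by omega)
      simp at t1 t4 t5
      omega
    · have t1 := topq (a + 1) (by omega) (by omega) (by omega) (by omega)
      have t3 := topq (a + 3) (by omega) (by omega) (by omega) (by omega)
      simp at t1 t3
      omega

lemma numPeakSet_lt (G : Gap n a S) (h : 0 < numPeakSet n S) :
    numPeakSet n S < numPeakSet n (insert (a + 2) S) := by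
  classical
  unfold numPeakSet at *
  simp only [peakSet_iff] at *
  have hne : Nonempty {σ : Equiv.Perm (Fin n) // HasPeaks n (pv σ) S} := by
    by_contra hcon
    rw [not_nonempty_iff] at hcon
    simp at h
  obtain ⟨σ, hσ⟩ := hne
  obtain ⟨τ, hτ, hτ'⟩ := exists_not_image G σ hσ
  let F : {σ : Equiv.Perm (Fin n) // HasPeaks n (pv σ) S} →
      {σ : Equiv.Perm (Fin n) // HasPeaks n (pv σ) (insert (a + 2) S)} :=
    fun x => ⟨phi n a G.len x.1, phi_peaks G x.1 x.2⟩
  rw [Nat.card_eq_fintype_card, Nat.card_eq_fintype_card]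
  apply Fintype.card_lt_of_injective_of_notMem F (b := ⟨τ, hτ⟩)
  · rintro ⟨x, hx⟩ ⟨y, hy⟩ hxy
    apply Subtype.ext
    exact phi_inj G x y hx hy (congrArg Subtype.val hxy)
  · rintro ⟨⟨x, hx⟩, hxe⟩
    exact hτ' x hx (congrArg Subtype.val hxe)

lemma numPeakSet_empty_pos (n : ℕ) : 0 < numPeakSet n ∅ := by
  unfold numPeakSet
  have : Nonempty {σ : Equiv.Perm (Fin n) // peakSet σ = ∅} := by
    refine ⟨⟨1, ?_⟩⟩
    rw [peakSet_iff]
    intro i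
    simp only [Finset.notMem_empty, false_iff]
    rintro ⟨h1, h2, h3, h4⟩
    rw [pv_eq _ _ (by omega) (by omega), pv_eq _ _ (by omega) (by omega)] at h4
    simp at h4
    omega
  exact Nat.card_pos

end Main

lemma mem_compPeaks_s16 (c : List ℕ) (y : ℕ) :
    y ∈ compPeaks c ↔ ∃ j, j + 1 < c.length ∧ (c.take (j + 1)).sum = y := by
  simp only [compPeaks, Finset.mem_image, Finset.mem_range]
  constructor
  · rintro ⟨j, h1, h2⟩; exact ⟨j, by omega, h2⟩
  · rintro ⟨j, h1, h2⟩; exact ⟨j, by omega, h2⟩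

lemma mem_compPeaks_cons (x : ℕ) (r : List ℕ) (y : ℕ) :
    y ∈ compPeaks (x :: r) ↔ r ≠ [] ∧ (y = x ∨ ∃ z ∈ compPeaks r, y = x + z) := by
  simp only [mem_compPeaks_s16]
  constructor
  · rintro ⟨j, h1, h2⟩
    refine ⟨by rintro rfl; simp at h1, ?_⟩
    rcases j with _ | j
    · left; simpa using h2.symm
    · right
      refine ⟨_, ⟨j, by simpa using h1, rfl⟩, ?_⟩
      rw [← h2]; simp
  · rintro ⟨h1, rfl | ⟨z, ⟨j, h2, rfl⟩, rfl⟩⟩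
    · refine ⟨0, ?_, by simp⟩
      have := List.length_pos_iff.2 h1
      simp; omega
    · exact ⟨j + 1, by simpa using h2, by simp⟩

lemma compPeaks_split (x : ℕ) (r : List ℕ) : ∀ l : List ℕ, ∀ y,
    y ∈ compPeaks (l ++ 2 :: (x + 2) :: r) ↔
      y = l.sum + 2 ∨ y ∈ compPeaks (l ++ (x + 4) :: r)
  | [], y => by
    simp only [List.nil_append, mem_compPeaks_cons]
    constructor
    · rintro ⟨_, rfl | ⟨z, ⟨h1, rfl | ⟨u, hu, rfl⟩⟩, rfl⟩⟩
      · left; simp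
      · right; exact ⟨h1, Or.inl (by omega)⟩
      · right; exact ⟨h1, Or.inr ⟨u, hu, by omega⟩⟩
    · rintro (rfl | ⟨h1, rfl | ⟨u, hu, rfl⟩⟩)
      · simp
      · exact ⟨by simp, Or.inr ⟨x + 2, ⟨h1, Or.inl rfl⟩, by omega⟩⟩
      · exact ⟨by simp, Or.inr ⟨x + 2 + u, ⟨h1, Or.inr ⟨u, hu, rfl⟩⟩, by omega⟩⟩
  | b :: l, y => by
    have ih := compPeaks_split x r l
    simp only [List.cons_append, mem_compPeaks_cons, List.sum_cons]
    constructor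
    · rintro ⟨_, rfl | ⟨z, hz, rfl⟩⟩
      · right; simp
      · rcases (ih z).1 hz with rfl | hz
        · left; omega
        · right; exact ⟨by simp, Or.inr ⟨z, hz, rfl⟩⟩
    · rintro (rfl | ⟨h1, rfl | ⟨z, hz, rfl⟩⟩)
      · exact ⟨by simp, Or.inr ⟨_, (ih _).2 (Or.inl rfl), by omega⟩⟩
      · exact ⟨by simp, Or.inl rfl⟩
      · exact ⟨by simp, Or.inr ⟨_, (ih _).2 (Or.inr hz), rfl⟩⟩

lemma compPeaks_gap (x : ℕ) (r : List ℕ) (hx : r = [] ∨ 5 ≤ x) : ∀ l : List ℕ, ∀ y,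
    y ∈ compPeaks (l ++ x :: r) → y ≤ l.sum ∨ l.sum + 5 ≤ y
  | [], y => by
    simp only [List.nil_append, mem_compPeaks_cons, List.sum_nil]
    rintro ⟨h1, rfl | ⟨z, hz, rfl⟩⟩
    · right; have := hx.resolve_left h1; omega
    · right; have := hx.resolve_left h1; omega
  | b :: l, y => by
    have ih := compPeaks_gap x r hx l
    simp only [List.cons_append, mem_compPeaks_cons, List.sum_cons]
    rintro ⟨_, rfl | ⟨z, hz, rfl⟩⟩
    · left; omega
    · have := ih z hz; omega

lemma compPeaks_left (x : ℕ) (r : List ℕ) (l : List ℕ) :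
    l.sum = 0 ∨ l.sum ∈ compPeaks (l ++ x :: r) := by
  rcases List.eq_nil_or_concat l with rfl | ⟨l', b, rfl⟩
  · left; rfl
  · right
    rw [mem_compPeaks_s16]
    refine ⟨l'.length, ?_, ?_⟩
    · simp
    · rw [List.take_left' (by simp)]

lemma not_maximal (l r : List ℕ) (x : ℕ) (hpos : ∀ y ∈ l ++ x :: r, 0 < y)
    (hx : r = [] ∨ 5 ≤ x) (hx4 : 4 ≤ x) (hn : 5 ≤ (l ++ x :: r).sum) :
    ¬ IsMaximal (l ++ x :: r) := by
  intro hM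
  have hsum : (l ++ x :: r).sum = l.sum + x + r.sum := by simp; omega
  by_cases h0 : 0 < Pcomp (l ++ x :: r)
  · have hgap := compPeaks_gap x r hx l
    have G : Gap (l ++ x :: r).sum l.sum (compPeaks (l ++ x :: r)) :=
      { left := compPeaks_left x r l
        g1 := fun h => by have := hgap _ h; omega
        g2 := fun h => by have := hgap _ h; omega
        g3 := fun h => by have := hgap _ h; omega
        g4 := fun h => by have := hgap _ h; omega
        len := by omega
        big := hn }
    have hlt := numPeakSet_lt G h0
    obtain ⟨t, rfl⟩ : ∃ t, x = t + 4 := ⟨x - 4, by omega⟩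
    have hs : (l ++ 2 :: (t + 2) :: r).sum = (l ++ (t + 4) :: r).sum := by
      simp; omega
    have hb := hM (l ++ 2 :: (t + 2) :: r) ⟨by
      intro y hy
      simp only [List.mem_append, List.mem_cons] at hy hpos
      rcases hy with hy | rfl | rfl | hy
      · exact hpos y (Or.inl hy)
      · omega
      · omega
      · exact hpos y (Or.inr (Or.inr hy)), hs⟩
    have he : compPeaks (l ++ 2 :: (t + 2) :: r) =
        insert (l.sum + 2) (compPeaks (l ++ (t + 4) :: r)) := by
      ext y
      rw [compPeaks_split, Finset.mem_insert]
    unfold Pcomp at hb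
    rw [hs, he] at hb
    omega
  · have hb := hM [(l ++ x :: r).sum] ⟨by simp; omega, by simp⟩
    have : 0 < Pcomp [(l ++ x :: r).sum] := by
      have := numPeakSet_empty_pos [(l ++ x :: r).sum].sum
      simpa [Pcomp, compPeaks] using this
    omega

theorem largest_part_in_maximal (n : ℕ) (c : List ℕ) (hc : IsComposition n c) :
    (c.length = 1 → 5 ≤ n → ¬ IsMaximal c) ∧
    (2 ≤ c.length →
      ((∃ i, i + 1 < c.length ∧ 5 ≤ c.getD i 0) ∨ 4 ≤ c.getD (c.length - 1) 0) →
      ¬ IsMaximal c) := by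
  obtain ⟨hpos, hsum⟩ := hc
  constructor
  · intro h1 h5
    obtain ⟨x, rfl⟩ := List.length_eq_one_iff.1 h1
    have hx : x = n := by simpa using hsum
    exact not_maximal [] [] x hpos (Or.inl rfl) (by omega) (by simp; omega)
  · intro h2 h
    have key : ∃ i, ∃ hi : i < c.length, 4 ≤ (c)[i] ∧ (i + 1 = c.length ∨ 5 ≤ (c)[i]) := by
      rcases h with ⟨i, hi, h5⟩ | h4
      · refine ⟨i, by omega, ?_⟩
        rw [List.getD_eq_getElem _ _ (by omega)] at h5
        exact ⟨by omega, Or.inr h5⟩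
      · refine ⟨c.length - 1, by omega, ?_⟩
        rw [List.getD_eq_getElem _ _ (by omega)] at h4
        exact ⟨h4, Or.inl (by omega)⟩
    obtain ⟨i, hi, h4, h5⟩ := key
    have hdec : c = c.take i ++ (c)[i] :: c.drop (i + 1) := by
      rw [List.getElem_cons_drop, List.take_append_drop]
    have hbig : 5 ≤ c.sum := by
      rcases h5 with h5 | h5
      · have hp0 := hpos (c)[0] (List.getElem_mem (by omega))
        have hmem : (c)[0] ∈ c.take i := by
          rw [List.mem_take_iff_getElem]
          exact ⟨0, by omega, rfl⟩
        have := List.le_sum_of_mem hmem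
        have hs := congrArg List.sum hdec
        simp only [List.sum_append, List.sum_cons] at hs
        omega
      · have := List.le_sum_of_mem (List.getElem_mem hi)
        omega
    rw [hdec] at hpos hbig ⊢
    refine not_maximal _ _ _ hpos ?_ h4 hbig
    rcases h5 with h5 | h5
    · left; rw [h5]; simp
    · exact Or.inr h5
end
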